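/- Under Assumptions A1 and A2, let γ ≥ 0, g ∈ L_{W^γ} (with W = log V), n ≥ 1 and assume Var_π(S_n) > 0. Define J_n = max( n·ρ^{−1/2}·(log(1/ρ))^{−1}·C_0²·‖ḡ‖_{W^γ}² / Var_π(S_n), 1 )·2^{1+3γ}·γ^{3γ}·C_0·‖ḡ‖_{W^γ}/log(1/ρ), with C_0 = 2cπ(V) and the convention 0^0 = 1. Then (i) for every t ≥ 0, P_π(|S_n| ≥ t) ≤ 2·exp( −(t²/2)/(Var_π(S_n) + J_n^{1/(γ+3)}·t^{2−1/(γ+3)}) ); and (ii) for every δ ∈ (0,1), P_π( |S_n| ≥ 2·√(Var_π(S_n))·√(log(4/δ)) + 4^{γ+3}·J_n·(log(4/δ))^{γ+3} ) ≤ δ. -/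

import Mathlib

open MeasureTheory ProbabilityTheory Finset
open scoped ENNReal Classical

noncomputable section

/-- `n`-th iterate of a Markov kernel. -/
def kIter {Y : Type*} [MeasurableSpace Y] (Q : ProbabilityTheory.Kernel Y Y) :
    ℕ → ProbabilityTheory.Kernel Y Y
  | 0 => ProbabilityTheory.Kernel.id
  | n + 1 => (kIter Q n).comp Q

/-- `U`-weighted total variation distance between two finite measures:
`∫ U d|μ - ν|`, via the Jordan decomposition of `μ - ν`. -/
def wTV {Y : Type*} [MeasurableSpace Y] (U : Y → ℝ) (μ ν : Measure Y) : ℝ :=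
  (∫ x, U x ∂(μ - ν)) + ∫ x, U x ∂(ν - μ)

/-- `U`-weighted sup norm `‖g‖_U = sup_x |g x| / U x`. -/
def vnorm {Y : Type*} (U : Y → ℝ) (g : Y → ℝ) : ℝ := ⨆ x, |g x| / U x

/-- Membership in the class `L_U`: measurable with finite `U`-weighted sup norm. -/
structure MemL {Y : Type*} [MeasurableSpace Y] (U : Y → ℝ) (g : Y → ℝ) : Prop where
  meas : Measurable g
  bdd : BddAbove (Set.range fun x => |g x| / U x)

/-- `(Xs n)` is a Markov chain with initial distribution `ξ` and Markov kernel `Q`: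
the law of `Xs 0` is `ξ` and, conditionally on the past up to time `n`, the
distribution of `Xs (n+1)` is `Q (Xs n)`. -/
structure IsMarkovChain {X : Type*} [MeasurableSpace X] {Ω : Type*} [MeasurableSpace Ω]
    (P : Measure Ω) (Xs : ℕ → Ω → X) (ξ : Measure X)
    (Q : ProbabilityTheory.Kernel X X) : Prop where
  meas : ∀ n, Measurable (Xs n)
  init : P.map (Xs 0) = ξ
  markov : ∀ (n : ℕ) (f : X → ℝ), Measurable f → (∀ x, |f x| ≤ 1) →
    (P[fun ω => f (Xs (n + 1) ω) |
        ⨆ i ∈ Finset.range (n + 1), MeasurableSpace.comap (Xs i) inferInstance])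
      =ᵐ[P] fun ω => ∫ y, f y ∂(Q (Xs n ω))

/-- The combinatorial coefficient `B_γ(u,q)`. -/
def Bcoef (γ : ℝ) (u q : ℕ) : ℝ :=
  ((2 * q).factorial : ℝ) / (u.factorial : ℝ) *
    ∑ k ∈ Finset.univ.filter
        (fun k : Fin u → Fin (2 * q + 1) =>
          (∀ i, 2 ≤ (k i : ℕ)) ∧ ∑ i, (k i : ℕ) = 2 * q),
      ∏ i, ((k i : ℕ).factorial : ℝ) ^ (γ + 2)

/-- The `2q`-th moment `(2q)!/(q! 2^q)` of the standard Gaussian. -/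
def gaussMoment (q : ℕ) : ℝ := ((2 * q).factorial : ℝ) / ((q.factorial : ℝ) * 2 ^ q)

section
open scoped Nat

lemma df_succ (n : ℕ) : 2 * (n + 1)‼ ≤ (n + 3) * n‼ := by
  induction n using Nat.twoStepInduction with
  | zero => decide
  | one => decide
  | more n h1 h2 =>
    have e1 : (n + 2 + 1)‼ = (n + 3) * (n + 1)‼ := rfl
    have e2 : (n + 2)‼ = (n + 2) * n‼ := rfl
    rw [e1, e2]
    nlinarith

lemma df_ratio (w : ℝ) (hw : 2 ≤ w) (n j : ℕ) (h : (n : ℝ) + j + 3 ≤ w ^ 2) :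
    ((n + j + 1)‼ : ℝ) ≤ w ^ (j + 2) / 2 * (n‼ : ℝ) := by
  have hn : (0 : ℝ) ≤ (n‼ : ℝ) := Nat.cast_nonneg _
  induction j using Nat.twoStepInduction with
  | zero =>
    have := df_succ n
    have h2 : (2 : ℝ) * ((n + 1)‼ : ℝ) ≤ (n + 3) * (n‼ : ℝ) := by exact_mod_cast this
    push_cast at h
    simp only [add_zero, zero_add]
    nlinarith
  | one =>
    have e2 : (n + 1 + 1)‼ = (n + 2) * n‼ := rfl
    rw [e2]
    push_cast at h ⊢
    refine mul_le_mul_of_nonneg_right ?_ hn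
    have : w ^ 2 * 2 ≤ w ^ 2 * w := by nlinarith [sq_nonneg w]
    have : w ^ (1+2) = w ^ 2 * w := by ring
    nlinarith
  | more j h1 h2 =>
    have e2 : (n + (j + 2) + 1)‼ = (n + j + 3) * (n + j + 1)‼ := by
      have : n + (j + 2) + 1 = (n + j + 1) + 2 := by ring
      rw [this]; rfl
    rw [e2]
    push_cast at h ⊢
    have h1' := h1 (by linarith)
    have hp : (0 : ℝ) ≤ ((n + j + 1)‼ : ℝ) := Nat.cast_nonneg _
    calc ((n : ℝ) + j + 3) * ((n + j + 1)‼ : ℝ) ≤ w ^ 2 * (w ^ (j + 2) / 2 * (n‼ : ℝ)) := by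
          apply mul_le_mul (by linarith) h1' hp (by positivity)
      _ = _ := by ring

lemma fact_ineq_nat (j : ℕ) : (j + 4) ^ 2 * ((j + 4)!) ^ 4 ≤ 324 * (j + 4) ^ (4 * j + 7) := by
  induction j with
  | zero => decide
  | succ j ih =>
    have e : (j + 1 + 4)! = (j + 5) * (j + 4)! := Nat.factorial_succ _
    rw [e]
    have h1 : (j + 4) ^ (4 * j + 7) * (j + 5) ^ 2 ≤ (j + 5) ^ (4 * j + 7) * (j + 4) ^ 2 := by
      have := Nat.pow_le_pow_left (show j + 4 ≤ j + 5 by omega) (4 * j + 5)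
      calc (j + 4) ^ (4 * j + 7) * (j + 5) ^ 2 = (j+4)^(4*j+5) * ((j+4)^2 * (j+5)^2) := by ring
        _ ≤ (j+5)^(4*j+5) * ((j+4)^2 * (j+5)^2) := Nat.mul_le_mul_right _ this
        _ = _ := by ring
    have h2 : (j + 4) ^ 2 * ((j + 5) ^ 6 * ((j + 4)!) ^ 4) ≤
        (j + 4) ^ 2 * (324 * (j + 5) ^ (4 * j + 11)) := by
      calc (j + 4) ^ 2 * ((j + 5) ^ 6 * ((j + 4)!) ^ 4)
          = (j + 5) ^ 6 * ((j + 4) ^ 2 * ((j + 4)!) ^ 4) := by ring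
        _ ≤ (j + 5) ^ 6 * (324 * (j + 4) ^ (4 * j + 7)) := Nat.mul_le_mul_left _ ih
        _ = 324 * (j + 5) ^ 4 * ((j + 4) ^ (4 * j + 7) * (j + 5) ^ 2) := by ring
        _ ≤ 324 * (j + 5) ^ 4 * ((j + 5) ^ (4 * j + 7) * (j + 4) ^ 2) := Nat.mul_le_mul_left _ h1
        _ = _ := by ring
    have h3 := Nat.le_of_mul_le_mul_left h2 (by positivity)
    calc (j + 1 + 4) ^ 2 * ((j + 5) * (j + 4)!) ^ 4 = (j + 5) ^ 6 * ((j + 4)!) ^ 4 := by ring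
      _ ≤ _ := h3
      _ = _ := by ring_nf

lemma fact_ineq (w : ℝ) (hw : 2 ≤ w) (j : ℕ) (h : (j : ℝ) + 3 ≤ w ^ 2) :
    ((j : ℝ) + 3) * ((j + 3)! : ℝ) ^ 2 ≤ 18 * w ^ (4 * j + 3) := by
  have hw0 : 0 ≤ w := by linarith
  refine le_of_pow_le_pow_left₀ (n := 2) (by norm_num) (by positivity) ?_
  have e : (18 * w ^ (4 * j + 3)) ^ 2 = 324 * (w ^ 2) ^ (4 * j + 3) := by ring
  rw [e]
  rcases j with _ | j
  · have : (4 : ℝ) ^ 3 ≤ (w ^ 2) ^ 3 := pow_le_pow_left₀ (by norm_num) (by nlinarith) 3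
    norm_num [Nat.factorial] at this ⊢
    linarith
  · have h1 := fact_ineq_nat j
    have h2 : ((j : ℝ) + 4) ^ 2 * ((j + 4)! : ℝ) ^ 4 ≤ 324 * ((j : ℝ) + 4) ^ (4 * j + 7) := by
      exact_mod_cast h1
    have h3 : ((j : ℝ) + 4) ^ (4 * j + 7) ≤ (w ^ 2) ^ (4 * j + 7) :=
      pow_le_pow_left₀ (by positivity) (by push_cast at h; linarith) _
    have e3 : (j + 1 + 3)! = (j + 4)! := rfl
    have e4 : 4 * (j + 1) + 3 = 4 * j + 7 := by ring
    rw [e3, e4]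
    push_cast
    calc (((j : ℝ) + 1 + 3) * ((j + 4)! : ℝ) ^ 2) ^ 2
        = ((j : ℝ) + 4) ^ 2 * ((j + 4)! : ℝ) ^ 4 := by ring
      _ ≤ _ := by linarith

lemma super_sol (B L : ℕ → ℝ) (N : ℕ) (w r : ℝ) (hw : 2 ≤ w) (hN : (N : ℝ) ≤ w ^ 2)
    (hr0 : 0 ≤ r) (hr1 : r < 1) (hB0 : B 0 = 1)
    (hrec : ∀ p : ℕ, ((p : ℝ) + 1) * B (p + 1) = ∑ k ∈ range (p + 1), L k * B (p - k))
    (hL0 : L 0 = 0) (hL1 : L 1 = 1 - r)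
    (hL : ∀ j, j + 3 ≤ N → |L (j + 2)| ≤ 45 / 8 * (1 - r) * r ^ (3 * (j + 1)) / w ^ (j + 2)) :
    ∀ p, p ≤ N → |B p| ≤ 1 / (p‼ : ℝ) := by
  intro p
  induction p using Nat.strong_induction_on with
  | _ p ih =>
  intro hp
  match p with
  | 0 => simp [hB0]
  | 1 =>
    have := hrec 0
    simp [hL0] at this
    simp [this]
  | q + 2 =>
    have h := hrec (q + 1)
    rw [sum_range_succ', sum_range_succ'] at h
    simp only [hL0, zero_mul, add_zero, zero_add, hL1, Nat.add_sub_cancel] at h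
    have hdf : ((q + 2)‼ : ℝ) = (q + 2) * (q‼ : ℝ) := by
      have : (q + 2)‼ = (q + 2) * q‼ := rfl
      rw [this]; push_cast; ring
    have hq : (0 : ℝ) < (q‼ : ℝ) := by exact_mod_cast Nat.doubleFactorial_pos q
    have hq2 : (0 : ℝ) < (q : ℝ) + 2 := by positivity
    have bq := ih q (by omega) (by omega)
    have bterm : ∀ j ∈ range q, |L (j + 1 + 1) * B (q + 1 - (j + 1 + 1))| ≤
        45 / 16 * (1 - r) * r ^ 3 * (r ^ 3) ^ j * (1 / (q‼ : ℝ)) := by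
      intro j hj
      have hj' := mem_range.1 hj
      obtain ⟨n, rfl⟩ : ∃ n, q = n + j + 1 := ⟨q - j - 1, by omega⟩
      have e1 : n + j + 1 + 1 - (j + 1 + 1) = n := by omega
      rw [e1, abs_mul]
      have b1 := hL j (by omega)
      have b2 := ih n (by omega) (by omega)
      have hn : (0 : ℝ) < (n‼ : ℝ) := by exact_mod_cast Nat.doubleFactorial_pos n
      have b3 := df_ratio w hw n j (by
        have : ((n + j + 1 + 2 : ℕ) : ℝ) ≤ N := by exact_mod_cast hp
        push_cast at this; linarith)
      have hw0 : 0 < w ^ (j + 2) := by positivity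
      have b4 : 1 / (n‼ : ℝ) ≤ w ^ (j + 2) / 2 * (1 / ((n + j + 1)‼ : ℝ)) := by
        rw [mul_one_div, div_le_div_iff₀ hn hq]; linarith
      calc |L (j + 1 + 1)| * |B n| ≤ (45 / 8 * (1 - r) * r ^ (3 * (j + 1)) / w ^ (j + 2)) *
            (w ^ (j + 2) / 2 * (1 / ((n + j + 1)‼ : ℝ))) := by
            refine mul_le_mul b1 (b2.trans b4) (abs_nonneg _) ?_
            have : 0 ≤ 1 - r := by linarith
            positivity
        _ = _ := by
            have : r ^ (3 * (j + 1)) = r ^ 3 * (r ^ 3) ^ j := by rw [← pow_mul]; ring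
            rw [this]; field_simp; ring
    have bsum := (abs_sum_le_sum_abs _ _).trans (sum_le_sum bterm)
    rw [← sum_mul, ← mul_sum] at bsum
    set A := ∑ j ∈ range q, (r ^ 3) ^ j with hA
    have hA0 : 0 ≤ A := sum_nonneg fun j _ => by positivity
    have hAg : A * (1 - r ^ 3) ≤ 1 := by
      have := geom_sum_mul (r ^ 3) q
      have h5 : 0 ≤ (r ^ 3) ^ q := by positivity
      nlinarith
    have hgeo : 45 / 16 * (1 - r) * r ^ 3 * A ≤ r := by
      set Y := (1 - r) * A with hY
      have hY0 : 0 ≤ Y := mul_nonneg (by linarith) hA0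
      have hY1 : (1 + r + r ^ 2) * Y ≤ 1 := by rw [hY]; nlinarith
      have h6 : 45 / 16 * r ^ 2 ≤ 1 + r + r ^ 2 := by nlinarith
      have h7 : 45 / 16 * r ^ 2 * Y ≤ 1 := (mul_le_mul_of_nonneg_right h6 hY0).trans hY1
      calc 45 / 16 * (1 - r) * r ^ 3 * A = r * (45 / 16 * r ^ 2 * Y) := by rw [hY]; ring
        _ ≤ r * 1 := mul_le_mul_of_nonneg_left h7 hr0
        _ = r := mul_one r
    have hfin : |((q : ℝ) + 2) * B (q + 2)| ≤ 1 / (q‼ : ℝ) := by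
      have h8 : ((q : ℝ) + 2) * B (q + 2) = (((q + 1 : ℕ) : ℝ) + 1) * B (q + 1 + 1) := by
        push_cast; ring
      rw [h8, h]
      refine (abs_add_le _ _).trans ?_
      have h9 : |(1 - r) * B q| ≤ (1 - r) * (1 / (q‼ : ℝ)) := by
        rw [abs_mul, abs_of_nonneg (by linarith : 0 ≤ 1 - r)]
        exact mul_le_mul_of_nonneg_left bq (by linarith)
      have h10 : 45 / 16 * (1 - r) * r ^ 3 * A * (1 / (q‼ : ℝ)) ≤ r * (1 / (q‼ : ℝ)) :=
        mul_le_mul_of_nonneg_right hgeo (by positivity)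
      have : q + 1 - 1 = q := rfl
      calc _ ≤ r * (1 / (q‼ : ℝ)) + (1 - r) * (1 / (q‼ : ℝ)) := by
            refine add_le_add (bsum.trans h10) ?_
            simpa using h9
        _ = _ := by ring
    rw [abs_mul, abs_of_pos hq2] at hfin
    rw [hdf, le_div_iff₀ (by positivity)]
    rw [le_div_iff₀ hq] at hfin
    linarith

lemma one_add_inv_pow (N : ℕ) (hN : 1 ≤ N) :
    ((N : ℝ) - 1 / 2) * Real.exp 1 * N ^ N ≤ N * ((N : ℝ) + 1) ^ N := by
  have hN0 : (0 : ℝ) < N := by exact_mod_cast hN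
  have h1 : 2 * (1 / (N : ℝ)) / (1 / (N : ℝ) + 2) ≤ Real.log (1 + 1 / (N : ℝ)) :=
    Real.le_log_one_add_of_nonneg (by positivity)
  have e1 : 2 * (1 / (N : ℝ)) / (1 / (N : ℝ) + 2) = 2 / (2 * N + 1) := by field_simp; ring
  rw [e1] at h1
  have h2 : Real.exp (1 - 1 / (2 * N + 1)) ≤ (1 + 1 / (N : ℝ)) ^ N := by
    rw [← Real.rpow_natCast, Real.rpow_def_of_pos (by positivity)]
    apply Real.exp_le_exp.2
    have : 1 - 1 / (2 * (N : ℝ) + 1) = 2 / (2 * N + 1) * N := by field_simp; ring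
    rw [this]
    exact mul_le_mul_of_nonneg_right h1 hN0.le
  have h3 : (1 - 1 / (2 * (N : ℝ))) ≤ Real.exp (- (1 / (2 * N + 1))) := by
    have := Real.add_one_le_exp (-(1 / (2 * (N : ℝ) + 1)))
    have h4 : 1 / (2 * (N : ℝ) + 1) ≤ 1 / (2 * (N : ℝ)) :=
      one_div_le_one_div_of_le (by positivity) (by linarith)
    linarith
  have h5 : (1 - 1 / (2 * (N : ℝ))) * Real.exp 1 ≤ (1 + 1 / (N : ℝ)) ^ N := by
    refine le_trans ?_ h2
    rw [sub_eq_add_neg 1 (1 / (2 * (N : ℝ) + 1)), Real.exp_add, mul_comm]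
    exact mul_le_mul_of_nonneg_left h3 (Real.exp_pos _).le
  have e2 : (1 + 1 / (N : ℝ)) ^ N * N ^ N = ((N : ℝ) + 1) ^ N := by
    rw [← mul_pow]; congr 1; field_simp
  have e3 : ((N : ℝ) - 1 / 2) = N * (1 - 1 / (2 * (N : ℝ))) := by field_simp
  rw [e3, ← e2]
  calc (N : ℝ) * (1 - 1 / (2 * (N : ℝ))) * Real.exp 1 * N ^ N
      = N * ((1 - 1 / (2 * (N : ℝ))) * Real.exp 1) * N ^ N := by ring
    _ ≤ N * ((1 + 1 / (N : ℝ)) ^ N) * N ^ N := by gcongr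
    _ = _ := by ring

lemma gauss_end (q : ℕ) : ((2 * (q + 1))! : ℝ) * Real.exp ((q : ℝ) + 2) ≤
    2 * 4 ^ (q + 1) * ((q + 1)! : ℝ) * ((q : ℝ) + 2) ^ (q + 1) := by
  induction q with
  | zero =>
    have := Real.exp_one_lt_d9
    have h0 := Real.exp_pos 1
    have e : Real.exp ((0 : ℕ) + 2 : ℝ) = Real.exp 1 * Real.exp 1 := by
      rw [← Real.exp_add]; norm_num
    rw [e]
    norm_num [Nat.factorial]
    nlinarith
  | succ q ih =>
    have h := one_add_inv_pow (q + 2) (by omega)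
    have e1 : ((2 * (q + 1 + 1))! : ℝ) = (2 * q + 4) * (2 * q + 3) * ((2 * (q + 1))! : ℝ) := by
      have : 2 * (q + 1 + 1) = 2 * (q + 1) + 1 + 1 := by ring
      rw [this, Nat.factorial_succ, Nat.factorial_succ]; push_cast; ring
    have e2 : ((q + 1 + 1)! : ℝ) = (q + 2) * ((q + 1)! : ℝ) := by
      rw [Nat.factorial_succ]; push_cast; ring
    have e3 : Real.exp (((q + 1 : ℕ) : ℝ) + 2) = Real.exp 1 * Real.exp ((q : ℝ) + 2) := by
      rw [← Real.exp_add]; push_cast; ring_nf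
    rw [e1, e2, e3]
    push_cast at h ⊢
    have hq : (0 : ℝ) < (q : ℝ) + 2 := by positivity
    have h' : (2 * (q : ℝ) + 3) * Real.exp 1 * (q + 2) ^ (q + 1) ≤ 2 * ((q : ℝ) + 3) ^ (q + 2) := by
      have e5 : ((q : ℝ) + 2) ^ (q + 2) = (q + 2) * (q + 2) ^ (q + 1) := by ring
      have e6 : ((q : ℝ) + 2 + 1) = q + 3 := by ring
      rw [e5, e6] at h
      have : (q + 2 : ℝ) * ((2 * (q : ℝ) + 3) * Real.exp 1 * (q + 2) ^ (q + 1)) ≤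
          (q + 2) * (2 * ((q : ℝ) + 3) ^ (q + 2)) := by linarith
      exact le_of_mul_le_mul_left this hq
    calc (2 * (q : ℝ) + 4) * (2 * q + 3) * ((2 * (q + 1))! : ℝ) *
          (Real.exp 1 * Real.exp ((q : ℝ) + 2))
        = (2 * (q : ℝ) + 4) * (2 * q + 3) * Real.exp 1 *
          (((2 * (q + 1))! : ℝ) * Real.exp ((q : ℝ) + 2)) := by ring
      _ ≤ (2 * (q : ℝ) + 4) * (2 * q + 3) * Real.exp 1 *
          (2 * 4 ^ (q + 1) * ((q + 1)! : ℝ) * ((q : ℝ) + 2) ^ (q + 1)) := by gcongr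
      _ = 4 * (q + 2) * 4 ^ (q + 1) * ((q + 1)! : ℝ) *
          ((2 * (q : ℝ) + 3) * Real.exp 1 * (q + 2) ^ (q + 1)) := by ring
      _ ≤ 4 * (q + 2) * 4 ^ (q + 1) * ((q + 1)! : ℝ) * (2 * ((q : ℝ) + 3) ^ (q + 2)) := by gcongr
      _ = _ := by ring

lemma gauss_tail (q : ℕ) (hq : 1 ≤ q) (u : ℝ) (h1 : 2 * (q : ℝ) ≤ u) (h2 : u ≤ 2 * q + 2) :
    ((2 * q)! : ℝ) / ((2 * q)‼ : ℝ) ≤ 2 * Real.exp (-(u / 2)) * u ^ q := by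
  obtain ⟨k, rfl⟩ : ∃ k, q = k + 1 := ⟨q - 1, by omega⟩
  have h := gauss_end k
  have hq0 : (0 : ℝ) < ((k + 1 : ℕ) : ℝ) := by positivity
  set v := u / 2 with hv
  have hu : u = 2 * v := by rw [hv]; ring
  rw [hu] at h1 h2 ⊢
  rw [Nat.doubleFactorial_two_mul]
  have hv0 : 0 < v := by linarith
  have hqv : ((k + 1 : ℕ) : ℝ) ≤ v := by linarith
  have hvq : v ≤ (k : ℝ) + 2 := by push_cast at h2; linarith
  have m : ((k : ℝ) + 2) ^ (k + 1) ≤ v ^ (k + 1) * Real.exp ((k : ℝ) + 2 - v) := by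
    have a1 : ((k : ℝ) + 2) ≤ v * Real.exp (((k : ℝ) + 2 - v) / ((k + 1 : ℕ) : ℝ)) := by
      have := Real.add_one_le_exp (((k : ℝ) + 2 - v) / ((k + 1 : ℕ) : ℝ))
      have a2 : ((k : ℝ) + 2 - v) / v ≤ ((k : ℝ) + 2 - v) / ((k + 1 : ℕ) : ℝ) := by
        apply div_le_div_of_nonneg_left (by linarith) hq0 hqv
      calc ((k : ℝ) + 2) = v * (((k : ℝ) + 2 - v) / v + 1) := by field_simp; ring
        _ ≤ _ := by apply mul_le_mul_of_nonneg_left _ hv0.le; linarith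
    have a3 := pow_le_pow_left₀ (by positivity) a1 (k + 1)
    rw [mul_pow, ← Real.exp_nat_mul] at a3
    have : ((k + 1 : ℕ) : ℝ) * (((k : ℝ) + 2 - v) / ((k + 1 : ℕ) : ℝ)) = (k : ℝ) + 2 - v := by
      field_simp
    rwa [this] at a3
  rw [div_le_iff₀ (by positivity)]
  have hE := Real.exp_pos ((k : ℝ) + 2)
  refine le_of_mul_le_mul_right ?_ hE
  refine h.trans ?_
  push_cast
  calc 2 * 4 ^ (k + 1) * ((k + 1)! : ℝ) * ((k : ℝ) + 2) ^ (k + 1)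
      ≤ 2 * 4 ^ (k + 1) * ((k + 1)! : ℝ) * (v ^ (k + 1) * Real.exp ((k : ℝ) + 2 - v)) := by gcongr
    _ = _ := by
      have : Real.exp ((k : ℝ) + 2 - v) = Real.exp (-v) * Real.exp ((k : ℝ) + 2) := by
        rw [← Real.exp_add]; ring_nf
      have e4 : (4 : ℝ) ^ (k + 1) = 2 ^ (k + 1) * 2 ^ (k + 1) := by rw [← mul_pow]; norm_num
      rw [this, e4, mul_pow]; ring

end

section
open scoped Nat

lemma fact_le_pow (j : ℕ) : (j + 3)! ≤ 2 * (j + 3) ^ (j + 1) := by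
  induction j with
  | zero => decide
  | succ j ih =>
    have e : (j + 1 + 3)! = (j + 4) * (j + 3)! := Nat.factorial_succ _
    rw [e]
    calc (j + 4) * (j + 3)! ≤ (j + 4) * (2 * (j + 3) ^ (j + 1)) := Nat.mul_le_mul_left _ ih
      _ ≤ (j + 4) * (2 * (j + 4) ^ (j + 1)) := by gcongr; omega
      _ = _ := by ring

lemma L_bound (a y w r : ℝ) (ha : 3 ≤ a) (hw : 2 ≤ w) (hr0 : 0 < r) (hr1 : r < 1)
    (hy : y = w ^ 2 / r) (j : ℕ) (hj : (j : ℝ) + 3 ≤ w ^ 2) (Jt : ℝ) (hJt : Jt = y ^ (-a)) :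
    5 / 2 * (((j + 3)! : ℝ) / 2) ^ a * (1 - r) * Jt ^ (j + 1) * w ^ (j + 1) / ((j + 2)! : ℝ) ≤
      45 / 8 * (1 - r) * r ^ (3 * (j + 1)) / w ^ (j + 2) := by
  have hw0 : 0 < w := by linarith
  have hy0 : 0 < y := by rw [hy]; positivity
  have hwy : w ^ 2 ≤ y := by rw [hy, le_div_iff₀ hr0]; nlinarith [sq_nonneg w]
  set x := (((j + 3)! : ℝ) / 2) / y ^ (j + 1) with hx
  have hx0 : 0 < x := by positivity
  have hx1 : x ≤ 1 := by
    rw [hx, div_le_one (by positivity)]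
    have h1 : ((j + 3)! : ℝ) ≤ 2 * ((j : ℝ) + 3) ^ (j + 1) := by exact_mod_cast fact_le_pow j
    have h2 : ((j : ℝ) + 3) ^ (j + 1) ≤ y ^ (j + 1) :=
      pow_le_pow_left₀ (by positivity) (hj.trans hwy) _
    linarith
  have e1 : (((j + 3)! : ℝ) / 2) ^ a * Jt ^ (j + 1) = x ^ a := by
    rw [hx, Real.div_rpow (x := ((j + 3)! : ℝ) / 2) (y := y ^ (j + 1)) (by positivity) (by positivity), hJt, Real.rpow_neg hy0.le,
      inv_pow, div_eq_mul_inv (_ ^ a) ((y ^ (j+1)) ^ a)]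
    congr 2
    rw [← Real.rpow_natCast (y ^ a), ← Real.rpow_natCast y, ← Real.rpow_mul hy0.le,
      ← Real.rpow_mul hy0.le, mul_comm]
  have e2 : x ^ a ≤ x ^ 3 := by
    rw [← Real.rpow_natCast x 3]
    exact Real.rpow_le_rpow_of_exponent_ge hx0 hx1 (by exact_mod_cast ha)
  have e3 : x ^ 3 = ((j + 3)! : ℝ) ^ 3 / 8 * r ^ (3 * (j + 1)) / w ^ (6 * (j + 1)) := by
    have q1 : r ^ (3 * (j + 1)) = (r ^ (j + 1)) ^ 3 := by rw [← pow_mul]; ring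
    have q2 : w ^ (6 * (j + 1)) = ((w ^ 2) ^ (j + 1)) ^ 3 := by rw [← pow_mul, ← pow_mul]; ring
    rw [hx, hy, q1, q2, div_pow (w ^ 2) r]
    field_simp
    ring
  have hf := fact_ineq w hw j hj
  have e4 : ((j + 3)! : ℝ) = (j + 3) * ((j + 2)! : ℝ) := by
    rw [Nat.factorial_succ]; push_cast; ring
  have h1r : 0 < 1 - r := by linarith
  have hf2 : (0 : ℝ) < ((j + 2)! : ℝ) := by positivity
  calc 5 / 2 * (((j + 3)! : ℝ) / 2) ^ a * (1 - r) * Jt ^ (j + 1) * w ^ (j + 1) / ((j + 2)! : ℝ)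
      = 5 / 2 * (1 - r) * w ^ (j + 1) / ((j + 2)! : ℝ) *
          ((((j + 3)! : ℝ) / 2) ^ a * Jt ^ (j + 1)) := by ring
    _ ≤ 5 / 2 * (1 - r) * w ^ (j + 1) / ((j + 2)! : ℝ) *
         (((j + 3)! : ℝ) ^ 3 / 8 * r ^ (3 * (j + 1)) / w ^ (6 * (j + 1))) := by
        rw [e1, ← e3]; gcongr
    _ = 5 / 16 * (1 - r) * r ^ (3 * (j + 1)) * (((j : ℝ) + 3) * ((j + 3)! : ℝ) ^ 2) *
          (w ^ (j + 1) / w ^ (6 * (j + 1))) := by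
        rw [pow_succ ((j + 3)! : ℝ) 2]
        nth_rewrite 2 [e4]
        field_simp
        ring
    _ ≤ 5 / 16 * (1 - r) * r ^ (3 * (j + 1)) * (18 * w ^ (4 * j + 3)) *
          (w ^ (j + 1) / w ^ (6 * (j + 1))) := by gcongr
    _ = _ := by
        have : w ^ (6 * (j + 1)) = w ^ (4 * j + 3) * w ^ (j + 1) * w ^ (j + 2) := by ring
        rw [this]; field_simp; ring

lemma moment_tail (a σ2 J t : ℝ) (ha : 3 ≤ a) (hσ : 0 < σ2) (hJ : 0 < J) (ht : 0 < t)
    (β Λ : ℕ → ℝ) (hβ0 : β 0 = 1)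
    (hrec : ∀ p : ℕ, ((p : ℝ) + 1) * β (p + 1) = ∑ k ∈ range (p + 1), Λ k * β (p - k))
    (hΛ0 : Λ 0 = 0) (hΛ1 : Λ 1 = σ2)
    (hΛ : ∀ j : ℕ, |Λ (j + 2)| ≤
      5 / 2 * (((j + 3)! : ℝ) / 2) ^ a * σ2 * J ^ (j + 1) / ((j + 2)! : ℝ))
    (M : ℝ) (hM1 : M ≤ 1) (hM : ∀ q : ℕ, M * t ^ (2 * q) ≤ ((2 * q)! : ℝ) * β (2 * q)) :
    M ≤ 2 * Real.exp (-(t ^ 2 / 2) / (σ2 + J ^ (1 / a) * t ^ (2 - 1 / a))) := by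
  have ha0 : 0 < a := by linarith
  set y := (t / J) ^ (1 / a) with hy
  have hy0 : 0 < y := by positivity
  have e1 : J ^ (1 / a) * t ^ (2 - 1 / a) = t ^ 2 / y := by
    rw [hy, Real.div_rpow ht.le hJ.le, Real.rpow_sub ht]
    have := Real.rpow_pos_of_pos ht (1 / a)
    have := Real.rpow_pos_of_pos hJ (1 / a)
    norm_cast
    field_simp
  rw [e1]
  set D := σ2 + t ^ 2 / y with hD
  have hD0 : 0 < D := by positivity
  set u := t ^ 2 / D with hu
  have hu0 : 0 < u := by positivity
  have e2 : -(t ^ 2 / 2) / D = -(u / 2) := by rw [hu]; ring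
  rw [e2]
  set r := u / y with hr
  have hr0 : 0 < r := by positivity
  have h1r : 1 - r = σ2 * u / t ^ 2 := by
    rw [hr, hu, hD]; field_simp; ring
  have hr1 : r < 1 := by
    have : 0 < 1 - r := by rw [h1r]; positivity
    linarith
  have hyr : y = u / r := by rw [hr]; field_simp
  have hJt : J / t = y ^ (-a) := by
    rw [hy, ← Real.rpow_mul (by positivity)]
    have : 1 / a * -a = -1 := by field_simp
    rw [this, Real.rpow_neg_one, inv_div]
  -- Chebyshev
  have hcheb : M ≤ 1 / u := by
    have h := hM 1
    have h2 := hrec 1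
    have h1 := hrec 0
    simp [hΛ0] at h1
    simp [sum_range_succ, hΛ0, hΛ1, hβ0] at h2
    norm_num at h2
    have h3 : M * t ^ 2 ≤ σ2 := by
      norm_num [Nat.factorial] at h
      linarith
    have h4 : σ2 ≤ D := by rw [hD]; have : 0 < t ^ 2 / y := by positivity
                           linarith
    rw [hu, one_div_div, le_div_iff₀ (by positivity)]
    linarith
  by_cases hu4 : u < 4
  · by_cases hu2 : u < 2
    · by_cases hu1 : u ≤ 1.386
      · have : (1 : ℝ) / 2 ≤ Real.exp (-(u / 2)) := by
          have h2 := Real.log_two_gt_d9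
          rw [← Real.log_le_iff_le_exp (by norm_num), one_div, Real.log_inv]
          norm_num at hu1 h2 ⊢
          linarith
        linarith
      · push Not at hu1
        refine hcheb.trans ?_
        rw [div_le_iff₀ hu0]
        have h3 : Real.exp (-1) ≤ Real.exp (-(u / 2)) := Real.exp_le_exp.2 (by linarith)
        have h4 : (0.367 : ℝ) ≤ Real.exp (-1) := by
          rw [Real.exp_neg, le_inv_comm₀ (by norm_num) (Real.exp_pos _)]
          have := Real.exp_one_lt_d9
          norm_num at this ⊢
          linarith
        norm_num at hu1 h4
        nlinarith
    · push Not at hu2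
      have h := gauss_tail 1 le_rfl u (by norm_num; linarith) (by norm_num; linarith)
      norm_num [Nat.factorial, Nat.doubleFactorial] at h
      refine hcheb.trans ?_
      rw [div_le_iff₀ hu0]
      exact h
  push Not at hu4
  set w := Real.sqrt u with hw
  have hw2 : w ^ 2 = u := Real.sq_sqrt hu0.le
  have hwge : 2 ≤ w := by
    rw [hw]; apply Real.le_sqrt_of_sq_le; norm_num; linarith
  have hw0 : 0 < w := by linarith
  set q := ⌊u / 2⌋₊ with hq
  have hq1 : (q : ℝ) ≤ u / 2 := Nat.floor_le (by positivity)
  have hq2 : u / 2 < q + 1 := Nat.lt_floor_add_one _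
  have hqone : 1 ≤ q := by
    by_contra h
    have : q = 0 := by omega
    rw [this] at hq2; norm_num at hq2; linarith
  have hB := super_sol (fun p => β p * (w / t) ^ p) (fun k => Λ k * (w / t) ^ (k + 1)) (2 * q) w r
    hwge (by push_cast; rw [hw2]; linarith) hr0.le hr1 (by simp [hβ0]) ?_ (by simp [hΛ0]) ?_ ?_
    (2 * q) le_rfl
  · have hb : β (2 * q) ≤ t ^ (2 * q) / (((2 * q)‼ : ℝ) * u ^ q) := by
      have h1 := (le_abs_self _).trans hB
      have h2 : (w / t) ^ (2 * q) = u ^ q / t ^ (2 * q) := by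
        rw [div_pow, pow_mul w, hw2]
      have hdf : (0 : ℝ) < ((2 * q)‼ : ℝ) := by exact_mod_cast Nat.doubleFactorial_pos _
      simp only [h2] at h1
      rw [le_div_iff₀ hdf] at h1
      rw [le_div_iff₀ (by positivity)]
      have h3 : β (2 * q) * (((2 * q)‼ : ℝ) * u ^ q) =
        (β (2 * q) * (u ^ q / t ^ (2 * q)) * ((2 * q)‼ : ℝ)) * t ^ (2 * q) := by
        field_simp
      rw [h3]
      have : 0 < t ^ (2 * q) := by positivity
      nlinarith
    have hg := gauss_tail q hqone u (by linarith) (by linarith)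
    have h3 := hM q
    have h4 : ((2 * q)! : ℝ) * β (2 * q) ≤
        ((2 * q)! : ℝ) * (t ^ (2 * q) / (((2 * q)‼ : ℝ) * u ^ q)) := by gcongr
    have hdf : (0 : ℝ) < ((2 * q)‼ : ℝ) := by exact_mod_cast Nat.doubleFactorial_pos _
    have h5 : ((2 * q)! : ℝ) * (t ^ (2 * q) / (((2 * q)‼ : ℝ) * u ^ q)) =
        ((2 * q)! : ℝ) / ((2 * q)‼ : ℝ) / u ^ q * t ^ (2 * q) := by field_simp
    rw [h5] at h4
    have h6 := le_of_mul_le_mul_right (h3.trans h4) (by positivity)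
    refine h6.trans ?_
    rw [div_le_iff₀ (by positivity)]
    exact hg
  · intro p
    have h := hrec p
    have : ((p : ℝ) + 1) * (β (p + 1) * (w / t) ^ (p + 1)) =
        (((p : ℝ) + 1) * β (p + 1)) * (w / t) ^ (p + 1) := by ring
    rw [this, h, sum_mul]
    refine sum_congr rfl fun k hk => ?_
    have hk' := mem_range.1 hk
    have : (w / t) ^ (p + 1) = (w / t) ^ (k + 1) * (w / t) ^ (p - k) := by
      rw [← pow_add]; congr 1; omega
    rw [this]; ring
  · simp only [hΛ1]
    rw [h1r, div_pow]
    norm_num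
    rw [hw2]; ring
  · intro j hj
    have hj' : (j : ℝ) + 3 ≤ w ^ 2 := by
      have : ((j + 3 : ℕ) : ℝ) ≤ ((2 * q : ℕ) : ℝ) := by exact_mod_cast hj
      push_cast at this
      rw [hw2]; linarith
    refine le_trans ?_ (L_bound a y w r ha hwge hr0 hr1 (by rw [hw2]; exact hyr) j hj' (J / t) hJt)
    rw [abs_mul, abs_of_pos (by positivity : 0 < (w / t) ^ (j + 2 + 1))]
    refine (mul_le_mul_of_nonneg_right (hΛ j) (by positivity)).trans (le_of_eq ?_)
    have hs : σ2 = (1 - r) * t ^ 2 / w ^ 2 := by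
      rw [h1r, hw2]; field_simp
    rw [hs, div_pow, div_pow]
    have : w ^ (j + 2 + 1) = w ^ 2 * w ^ (j + 1) := by ring
    rw [this]
    have : t ^ (j + 2 + 1) = t ^ 2 * t ^ (j + 1) := by ring
    rw [this]
    field_simp

lemma part_two (a σ2 J δ : ℝ) (ha : 3 ≤ a) (hσ : 0 < σ2) (hJ : 0 < J) (hδ : 0 < δ) (hδ1 : δ < 1)
    (M t : ℝ) (ht : t = 2 * Real.sqrt σ2 * Real.sqrt (Real.log (4 / δ)) +
      4 ^ a * J * Real.log (4 / δ) ^ a)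
    (h : M ≤ 2 * Real.exp (-(t ^ 2 / 2) / (σ2 + J ^ (1 / a) * t ^ (2 - 1 / a)))) : M ≤ δ := by
  have ha0 : 0 < a := by linarith
  set l := Real.log (4 / δ) with hl
  have hl0 : 0 < l := Real.log_pos (by rw [lt_div_iff₀ hδ]; linarith)
  have ht0 : 0 < t := by rw [ht]; positivity
  set y := (t / J) ^ (1 / a) with hy
  have hy0 : 0 < y := by positivity
  have e1 : J ^ (1 / a) * t ^ (2 - 1 / a) = t ^ 2 / y := by
    rw [hy, Real.div_rpow ht0.le hJ.le, Real.rpow_sub ht0]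
    have := Real.rpow_pos_of_pos ht0 (1 / a)
    have := Real.rpow_pos_of_pos hJ (1 / a)
    norm_cast
    field_simp
  have hy4 : 4 * l ≤ y := by
    have h1 : (4 * l) ^ a ≤ t / J := by
      rw [le_div_iff₀ hJ, Real.mul_rpow (by norm_num) hl0.le, ht]
      have : 0 ≤ 2 * Real.sqrt σ2 * Real.sqrt l := by positivity
      linarith
    have h2 := Real.rpow_le_rpow (by positivity) h1 (by positivity : 0 ≤ 1 / a)
    rw [← Real.rpow_mul (by positivity)] at h2
    have : a * (1 / a) = 1 := by field_simp
    rwa [this, Real.rpow_one] at h2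
  have ht2 : 4 * σ2 * l ≤ t ^ 2 := by
    have h1 : 2 * Real.sqrt σ2 * Real.sqrt l ≤ t := by
      rw [ht]; have : 0 ≤ 4 ^ a * J * l ^ a := by positivity
      linarith
    have h2 := pow_le_pow_left₀ (by positivity) h1 2
    rw [mul_pow, mul_pow, Real.sq_sqrt hσ.le, Real.sq_sqrt hl0.le] at h2
    linarith
  have h3 : l * (σ2 + t ^ 2 / y) ≤ t ^ 2 / 2 := by
    have h4 : t ^ 2 / y * (4 * l) ≤ t ^ 2 := by
      rw [div_mul_eq_mul_div, div_le_iff₀ hy0]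
      have : 0 < t ^ 2 := by positivity
      nlinarith
    nlinarith
  have h5 : -(t ^ 2 / 2) / (σ2 + t ^ 2 / y) ≤ -l := by
    rw [div_le_iff₀ (by positivity)]; linarith
  rw [e1] at h
  have h6 := Real.exp_le_exp.2 h5
  rw [Real.exp_neg l, hl, Real.exp_log (by positivity)] at h6
  have : (4 / δ)⁻¹ = δ / 4 := by rw [inv_div]
  rw [this] at h6
  linarith

end

section
open scoped Nat

lemma num_one (k : ℕ) : ((k + 3)! : ℝ) * ((k : ℝ) + 3) ^ (k + 2) * (4 ^ (k + 3) / 9) * 0.26 * 1.32 ^ k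
    ≤ 5 / 2 * (((k + 3)! : ℝ) / 2) ^ 3 * 2 ^ (k + 1) := by
  rcases Nat.lt_or_ge k 2 with h | h
  · interval_cases k <;> norm_num [Nat.factorial]
  induction k, h using Nat.le_induction with
  | base => norm_num [Nat.factorial]
  | succ k hk ih =>
    have hk' : (2 : ℝ) ≤ k := by exact_mod_cast hk
    have e1 : ((k + 1 + 3)! : ℝ) = (k + 4) * ((k + 3)! : ℝ) := by
      rw [show k + 1 + 3 = (k + 3) + 1 by ring, Nat.factorial_succ]; push_cast; ring
    have hE : ((k : ℝ) + 4) ^ (k + 3) ≤ 2.7182818286 * ((k : ℝ) + 3) ^ (k + 3) := by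
      have h1 : (1 + 1 / ((k : ℝ) + 3)) ^ (k + 3) ≤ Real.exp 1 := by
        have h2 := Real.add_one_le_exp (1 / ((k : ℝ) + 3))
        have h3 := pow_le_pow_left₀ (by positivity) (add_comm (1 / ((k : ℝ) + 3)) 1 ▸ h2) (k + 3)
        rw [← Real.exp_nat_mul] at h3
        have : ((k + 3 : ℕ) : ℝ) * (1 / ((k : ℝ) + 3)) = 1 := by push_cast; field_simp
        rwa [this] at h3
      have e : ((k : ℝ) + 4) ^ (k + 3) = (1 + 1 / ((k : ℝ) + 3)) ^ (k + 3) * ((k : ℝ) + 3) ^ (k + 3) := by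
        rw [← mul_pow]; congr 1; field_simp; ring
      rw [e]
      have := Real.exp_one_lt_d9
      exact mul_le_mul_of_nonneg_right (h1.trans this.le) (by positivity)
    have e3 : ((k + 1 : ℕ) : ℝ) + 3 = k + 4 := by push_cast; ring
    rw [e1, e3]
    have hq : 5.28 * 2.7182818286 * ((k : ℝ) + 3) ≤ 2 * (k + 4) ^ 2 := by
      norm_num; nlinarith
    calc ((k : ℝ) + 4) * ((k + 3)! : ℝ) * (k + 4) ^ (k + 1 + 2) * (4 ^ (k + 1 + 3) / 9) * 0.26 * 1.32 ^ (k + 1)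
        = (k + 4) * ((k + 3)! : ℝ) * ((k : ℝ) + 4) ^ (k + 3) * (4 ^ (k + 3) / 9) * 0.26 * 1.32 ^ k * 5.28 := by ring
      _ ≤ (k + 4) * ((k + 3)! : ℝ) * (2.7182818286 * ((k : ℝ) + 3) ^ (k + 3)) * (4 ^ (k + 3) / 9) * 0.26 * 1.32 ^ k * 5.28 := by gcongr
      _ = (k + 4) * (5.28 * 2.7182818286 * ((k : ℝ) + 3)) *
        (((k + 3)! : ℝ) * ((k : ℝ) + 3) ^ (k + 2) * (4 ^ (k + 3) / 9) * 0.26 * 1.32 ^ k) := by ring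
      _ ≤ (k + 4) * (2 * (k + 4) ^ 2) * (5 / 2 * (((k + 3)! : ℝ) / 2) ^ 3 * 2 ^ (k + 1)) := by gcongr
      _ = _ := by ring

lemma num_gamma (γ : ℝ) (hγ : 0 ≤ γ) (k : ℕ) :
    ((γ * ((k : ℝ) + 3) / Real.exp 1) ^ γ) ^ (k + 3) ≤
      1.32 ^ k * (((k + 3)! : ℝ) / 2) ^ γ * (2 ^ (3 * γ) * γ ^ (3 * γ)) ^ (k + 1) := by
  rcases hγ.eq_or_lt with rfl | hγ
  · simp
    exact one_le_pow₀ (by norm_num)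
  have hK : (0 : ℝ) < (k : ℝ) + 3 := by positivity
  have he := Real.exp_pos 1
  have h1 : (((k : ℝ) + 3) / Real.exp 1) ^ (k + 3) ≤ ((k + 3)! : ℝ) := by
    have := Real.pow_div_factorial_le_exp ((k : ℝ) + 3) hK.le (k + 3)
    rw [div_le_iff₀ (by positivity)] at this
    rw [div_pow, div_le_iff₀ (by positivity), ← Real.exp_nat_mul]
    push_cast
    rw [mul_one]; linarith
  set z := 8 * γ ^ 2 with hz
  have hz0 : 0 < z := by positivity
  have hzg : (1 / z) ^ γ ≤ 1.32 := by
    have hs : 0 < Real.sqrt 8 := by positivity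
    have hs2 : Real.sqrt 8 ^ 2 = 8 := Real.sq_sqrt (by norm_num)
    have hsl : 2.82 ≤ Real.sqrt 8 := Real.le_sqrt_of_sq_le (by norm_num)
    have e1 : 1 / z = (1 / (Real.sqrt 8 * γ)) ^ 2 := by
      rw [hz, div_pow, mul_pow, hs2]; norm_num
    have h2 : Real.log (1 / (Real.sqrt 8 * γ)) ≤ 1 / (Real.sqrt 8 * γ) / Real.exp 1 := by
      have h3 := Real.log_le_sub_one_of_pos (x := 1 / (Real.sqrt 8 * γ) / Real.exp 1) (by positivity)
      rw [Real.log_div (by positivity) (by positivity), Real.log_exp] at h3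
      linarith
    rw [Real.rpow_def_of_pos (by positivity), e1, Real.log_pow,
      ← Real.le_log_iff_exp_le (by norm_num)]
    have h4 : (2 : ℕ) * Real.log (1 / (Real.sqrt 8 * γ)) * γ ≤ 2 / (Real.sqrt 8 * Real.exp 1) := by
      calc (2 : ℕ) * Real.log (1 / (Real.sqrt 8 * γ)) * γ
          ≤ (2 : ℕ) * (1 / (Real.sqrt 8 * γ) / Real.exp 1) * γ := by gcongr
        _ = _ := by push_cast; field_simp
    refine h4.trans ?_
    have h5 := Real.le_log_one_add_of_nonneg (x := 0.32) (by norm_num)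
    norm_num at h5 ⊢
    refine le_trans ?_ h5
    have := Real.exp_one_gt_d9
    rw [div_le_iff₀ (by positivity)]
    norm_num at hsl this
    nlinarith
  have h3 : (γ * ((k : ℝ) + 3) / Real.exp 1) ^ (k + 3) ≤
      (1 / z) ^ k * ((((k + 3)! : ℝ) / 2) * (8 * γ ^ 3) ^ (k + 1)) := by
    have e1 : (γ * ((k : ℝ) + 3) / Real.exp 1) ^ (k + 3) =
        γ ^ (k + 3) * (((k : ℝ) + 3) / Real.exp 1) ^ (k + 3) := by rw [← mul_pow]; ring
    have e2 : (1 / z) ^ k * ((((k + 3)! : ℝ) / 2) * (8 * γ ^ 3) ^ (k + 1)) =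
        4 * (γ ^ (k + 3) * ((k + 3)! : ℝ)) := by
      have : (8 * γ ^ 3) ^ (k + 1) = z ^ k * (8 * γ ^ (k + 3)) := by
        rw [hz, mul_pow 8 (γ^2) k]; ring
      rw [this, one_div, inv_pow]
      field_simp; ring
    rw [e1, e2]
    have : γ ^ (k + 3) * (((k : ℝ) + 3) / Real.exp 1) ^ (k + 3) ≤ γ ^ (k + 3) * ((k + 3)! : ℝ) := by
      gcongr
    have : 0 ≤ γ ^ (k + 3) * ((k + 3)! : ℝ) := by positivity
    linarith
  have sw : ∀ x : ℝ, 0 ≤ x → ∀ n : ℕ, (x ^ n) ^ γ = (x ^ γ) ^ n := by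
    intro x hx n
    rw [← Real.rpow_natCast, ← Real.rpow_natCast, ← Real.rpow_mul hx, ← Real.rpow_mul hx, mul_comm]
  have h4 := Real.rpow_le_rpow (by positivity) h3 hγ.le
  rw [Real.mul_rpow (by positivity) (by positivity), Real.mul_rpow (by positivity) (by positivity),
    sw _ (by positivity), sw _ (by positivity), sw _ (by positivity)] at h4
  have e5 : (8 * γ ^ 3) ^ γ = 2 ^ (3 * γ) * γ ^ (3 * γ) := by
    rw [Real.mul_rpow (by positivity) (by positivity), Real.rpow_mul (by norm_num) 3 γ,
      Real.rpow_mul hγ.le]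
    norm_num
  rw [e5] at h4
  refine h4.trans ?_
  rw [mul_assoc]
  gcongr

lemma num_theta (ρ : ℝ) (h0 : 0 < ρ) (h1 : ρ < 1) (k : ℕ) :
    (1 / (1 - ρ ^ (1 / ((k : ℝ) + 3)))) ^ (k + 2) ≤
      ρ ^ (-(1 : ℝ) / 2) * (((k : ℝ) + 3) / Real.log (1 / ρ)) ^ (k + 2) := by
  set L := Real.log (1 / ρ) with hL
  have hL0 : 0 < L := Real.log_pos (by rw [lt_div_iff₀ h0]; linarith)
  have hlog : Real.log ρ = -L := by rw [hL, one_div, Real.log_inv]; ring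
  set x := L / ((k : ℝ) + 3) with hx
  have hx0 : 0 < x := by positivity
  have e1 : ρ ^ (1 / ((k : ℝ) + 3)) = Real.exp (-x) := by
    rw [Real.rpow_def_of_pos h0, hlog, hx]; congr 1; ring
  have e2 : ρ ^ (-(1 : ℝ) / 2) = Real.exp (L / 2) := by
    rw [Real.rpow_def_of_pos h0, hlog]; congr 1; ring
  have e3 : ((k : ℝ) + 3) / L = 1 / x := by rw [hx]; field_simp
  rw [e1, e2, e3]
  have hpos : 0 < 1 - Real.exp (-x) := by
    have := Real.exp_lt_one_iff.2 (by linarith : -x < 0); linarith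
  have h3 : 1 / (1 - Real.exp (-x)) ≤ Real.exp (x / 2) * (1 / x) := by
    rw [div_le_iff₀ hpos, mul_one_div, div_mul_eq_mul_div, le_div_iff₀ hx0, mul_sub, ← Real.exp_add]
    have := Real.self_le_sinh_iff.2 (by positivity : 0 ≤ x / 2)
    rw [Real.sinh_eq] at this
    have e4 : x / 2 + -x = -(x / 2) := by ring
    rw [e4]
    linarith
  have h4 := pow_le_pow_left₀ (by positivity) h3 (k + 2)
  rw [mul_pow, ← Real.exp_nat_mul] at h4
  refine h4.trans ?_
  gcongr
  push_cast
  have : L = x * (k + 3) := by rw [hx]; field_simp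
  rw [this]; nlinarith

lemma num_C (C0 : ℝ) (hC0 : 2 * Real.exp 1 ≤ C0) (k : ℕ) :
    (2 ^ (1 / ((k : ℝ) + 3)) * C0 ^ (1 - 1 / ((k : ℝ) + 3))) ^ (k + 2) * (C0 / 2) ≤
      0.26 * C0 ^ (k + 3) := by
  have he := Real.exp_pos 1
  have hC : 0 < C0 := by linarith
  set K := (k : ℝ) + 3 with hK
  have hK0 : 0 < K := by positivity
  have e1 : 2 ^ (1 / K) * C0 ^ (1 - 1 / K) = C0 * (2 / C0) ^ (1 / K) := by
    rw [Real.rpow_sub hC, Real.rpow_one, Real.div_rpow (by norm_num) hC.le]; ring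
  rw [e1, mul_pow]
  have h1 : ((2 / C0) ^ (1 / K)) ^ (k + 2) ≤ 0.52 := by
    rw [← Real.rpow_natCast, ← Real.rpow_mul (by positivity)]
    have h2 : 2 / C0 ≤ Real.exp (-1) := by
      rw [Real.exp_neg, div_le_iff₀ hC, inv_mul_eq_div, le_div_iff₀ he]; linarith
    have h3 := Real.rpow_le_rpow (by positivity) h2 (by positivity : 0 ≤ 1 / K * ((k + 2 : ℕ) : ℝ))
    refine h3.trans ?_
    rw [← Real.exp_mul]
    have h4 : -1 * (1 / K * ((k + 2 : ℕ) : ℝ)) ≤ -(2 / 3) := by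
      have : 2 / 3 ≤ 1 / K * ((k + 2 : ℕ) : ℝ) := by
        rw [one_div, inv_mul_eq_div, div_le_div_iff₀ (by norm_num) hK0, hK]; push_cast
        have : (0 : ℝ) ≤ k := by positivity
        linarith
      linarith
    refine (Real.exp_le_exp.2 h4).trans ?_
    refine le_of_pow_le_pow_left₀ (n := 3) (by norm_num) (by norm_num) ?_
    rw [← Real.exp_nat_mul]
    have e5 : ((3 : ℕ) : ℝ) * -(2 / 3) = -(1 + 1) := by norm_num
    rw [e5, Real.exp_neg, Real.exp_add]
    have := Real.exp_one_gt_d9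
    rw [inv_le_comm₀ (by positivity) (by norm_num)]
    norm_num at this ⊢
    nlinarith
  calc C0 ^ (k + 2) * ((2 / C0) ^ (1 / K)) ^ (k + 2) * (C0 / 2)
      ≤ C0 ^ (k + 2) * 0.52 * (C0 / 2) := by gcongr
    _ = _ := by ring

/-- The numeric inequality closing the cumulant estimate. -/
lemma num_main (n : ℕ) (ρ C0 G γ σ2 J : ℝ) (h0 : 0 < ρ) (h1 : ρ < 1)
    (hC0 : 2 * Real.exp 1 ≤ C0) (hG : 0 < G) (hγ : 0 ≤ γ) (hσ : 0 < σ2)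
    (hJ : J = max ((n : ℝ) * ρ ^ (-(1 : ℝ) / 2) * (Real.log (1 / ρ))⁻¹ * C0 ^ 2 * G ^ 2 / σ2) 1 *
      (2 ^ (1 + 3 * γ) * γ ^ (3 * γ) * C0 * G / Real.log (1 / ρ)))
    (k : ℕ) (θ C b : ℝ) (hθ : θ = 1 / (1 - ρ ^ (1 / ((k : ℝ) + 3))))
    (hC : C = 2 ^ (1 / ((k : ℝ) + 3)) * C0 ^ (1 - 1 / ((k : ℝ) + 3)))
    (hb : b = G * (γ * ((k : ℝ) + 3) / Real.exp 1) ^ γ) :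
    (n : ℝ) * (((k : ℝ) + 3) * (C0 / 2) * (4 * θ * C * b) ^ (k + 3) / (9 * θ * C)) ≤
      5 / 2 * (((k + 3)! : ℝ) / 2) ^ (γ + 3) * σ2 * J ^ (k + 1) / ((k + 2)! : ℝ) := by
  have he := Real.exp_pos 1
  have hC0' : 0 < C0 := by linarith
  set L := Real.log (1 / ρ) with hL
  have hL0 : 0 < L := Real.log_pos (by rw [lt_div_iff₀ h0]; linarith)
  have hq : ρ ^ (1 / ((k : ℝ) + 3)) < 1 := Real.rpow_lt_one h0.le h1 (by positivity)
  have hθ0 : 0 < θ := by rw [hθ]; apply one_div_pos.2; linarith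
  have hCp : 0 < C := by rw [hC]; positivity
  set κ := (γ * ((k : ℝ) + 3) / Real.exp 1) ^ γ with hκ
  have hκ0 : 0 ≤ κ := by rw [hκ]; apply Real.rpow_nonneg; positivity
  set R := ρ ^ (-(1 : ℝ) / 2) with hR
  have hR0 : 0 < R := by positivity
  set M1 := (n : ℝ) * R * L⁻¹ * C0 ^ 2 * G ^ 2 / σ2 with hM1
  set B := (2 : ℝ) ^ (3 * γ) * γ ^ (3 * γ) with hB
  have hB0 : 0 ≤ B := by rw [hB]; have := Real.rpow_nonneg hγ (3 * γ); positivity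
  have eA : 2 ^ (1 + 3 * γ) * γ ^ (3 * γ) * C0 * G / L = 2 * B * C0 * G / L := by
    rw [Real.rpow_add (by norm_num), Real.rpow_one, hB]; ring
  have hM0 : 0 ≤ M1 := by positivity
  have hJk : M1 * (2 * B * C0 * G / L) ^ (k + 1) ≤ J ^ (k + 1) := by
    rw [hJ, eA, mul_pow]
    refine mul_le_mul_of_nonneg_right ?_ (by positivity)
    calc M1 ≤ max M1 1 := le_max_left _ _
      _ ≤ (max M1 1) ^ (k + 1) := le_self_pow₀ (le_max_right _ _) (by omega)
  have hthe : θ ^ (k + 2) ≤ R * (((k : ℝ) + 3) / L) ^ (k + 2) := by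
    rw [hθ]; exact num_theta ρ h0 h1 k
  have hCC : C ^ (k + 2) * (C0 / 2) ≤ 0.26 * C0 ^ (k + 3) := by rw [hC]; exact num_C C0 hC0 k
  have hgam := num_gamma γ hγ k
  have hn1 := num_one k
  have hf : (0 : ℝ) < ((k + 2)! : ℝ) := by positivity
  have ef : ((k + 3)! : ℝ) = (k + 3) * ((k + 2)! : ℝ) := by
    rw [Nat.factorial_succ]; push_cast; ring
  have epow : (((k + 3)! : ℝ) / 2) ^ (γ + 3) = (((k + 3)! : ℝ) / 2) ^ γ * (((k + 3)! : ℝ) / 2) ^ 3 := by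
    rw [Real.rpow_add (by positivity)]; norm_cast
  set fg := (((k + 3)! : ℝ) / 2) ^ γ with hfg
  have hfg0 : 0 ≤ fg := by positivity
  rw [le_div_iff₀ hf, epow]
  calc (n : ℝ) * (((k : ℝ) + 3) * (C0 / 2) * (4 * θ * C * b) ^ (k + 3) / (9 * θ * C)) * ((k + 2)! : ℝ)
      = n * ((k + 3) * ((k + 2)! : ℝ)) * (4 ^ (k + 3) / 9) * θ ^ (k + 2) * (C ^ (k + 2) * (C0 / 2)) *
          G ^ (k + 3) * κ ^ (k + 3) := by
        rw [hb]; field_simp; ring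
    _ ≤ n * ((k + 3) * ((k + 2)! : ℝ)) * (4 ^ (k + 3) / 9) * (R * (((k : ℝ) + 3) / L) ^ (k + 2)) *
          (0.26 * C0 ^ (k + 3)) * G ^ (k + 3) * (1.32 ^ k * fg * B ^ (k + 1)) := by gcongr
    _ = (((k + 3)! : ℝ) * ((k : ℝ) + 3) ^ (k + 2) * (4 ^ (k + 3) / 9) * 0.26 * 1.32 ^ k) *
          (n * R * C0 ^ (k + 3) * G ^ (k + 3) / L ^ (k + 2) * fg * B ^ (k + 1)) := by
        rw [ef, div_pow]; ring
    _ ≤ (5 / 2 * (((k + 3)! : ℝ) / 2) ^ 3 * 2 ^ (k + 1)) *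
          (n * R * C0 ^ (k + 3) * G ^ (k + 3) / L ^ (k + 2) * fg * B ^ (k + 1)) := by
        refine mul_le_mul_of_nonneg_right hn1 ?_
        positivity
    _ = 5 / 2 * (fg * (((k + 3)! : ℝ) / 2) ^ 3) * σ2 * (M1 * (2 * B * C0 * G / L) ^ (k + 1)) := by
        clear_value B M1
        have ep : (2 * B * C0 * G / L) ^ (k + 1) =
            2 ^ (k + 1) * B ^ (k + 1) * C0 ^ (k + 1) * G ^ (k + 1) / L ^ (k + 1) := by
          rw [div_pow, mul_pow, mul_pow, mul_pow]
        rw [hM1, ep]; field_simp; ring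
    _ ≤ _ := by gcongr

end

/-- Truncated weighted coefficient norm of a power series. -/
def tn (K : ℕ) (z : ℝ) (f : PowerSeries ℝ) : ℝ :=
  ∑ i ∈ range K, |PowerSeries.coeff i f| * z ^ i

lemma tn_nonneg (K : ℕ) (z : ℝ) (hz : 0 ≤ z) (f : PowerSeries ℝ) : 0 ≤ tn K z f :=
  sum_nonneg fun i _ => by positivity

lemma tn_add (K : ℕ) (z : ℝ) (hz : 0 ≤ z) (f g : PowerSeries ℝ) :
    tn K z (f + g) ≤ tn K z f + tn K z g := by
  unfold tn
  rw [← sum_add_distrib]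
  refine sum_le_sum fun i _ => ?_
  rw [map_add, ← add_mul]
  exact mul_le_mul_of_nonneg_right (abs_add_le _ _) (by positivity)

lemma tn_one (K : ℕ) (z : ℝ) : tn K z 1 ≤ 1 := by
  unfold tn
  rcases K with _ | K
  · simp
  · rw [sum_range_succ']
    simp [PowerSeries.coeff_one]

lemma sum_antidiag_le (K : ℕ) (f g : ℕ → ℝ) (hf : ∀ i, 0 ≤ f i) (hg : ∀ i, 0 ≤ g i) :
    ∑ i ∈ range K, ∑ p ∈ antidiagonal i, f p.1 * g p.2 ≤
      (∑ i ∈ range K, f i) * ∑ i ∈ range K, g i := by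
  have h1 : ∀ i ∈ range K, ∑ p ∈ antidiagonal i, f p.1 * g p.2 =
      ∑ k ∈ range (i + 1), f k * g (i - k) := fun i _ =>
    Finset.Nat.sum_antidiagonal_eq_sum_range_succ (fun a b => f a * g b) i
  rw [sum_congr rfl h1, Finset.sum_range_diag_flip K (fun a b => f a * g b), sum_mul_sum]
  refine sum_le_sum fun i _ => ?_
  refine sum_le_sum_of_subset_of_nonneg (fun x hx => ?_) fun a _ _ => mul_nonneg (hf _) (hg _)
  rw [mem_range] at hx ⊢; omega

lemma tn_mul (K : ℕ) (z : ℝ) (hz : 0 ≤ z) (f g : PowerSeries ℝ) :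
    tn K z (f * g) ≤ tn K z f * tn K z g := by
  unfold tn
  refine le_trans (sum_le_sum fun i _ => ?_) (sum_antidiag_le K
    (fun i => |PowerSeries.coeff i f| * z ^ i) (fun i => |PowerSeries.coeff i g| * z ^ i)
    (fun i => by positivity) fun i => by positivity)
  rw [PowerSeries.coeff_mul]
  calc |∑ p ∈ antidiagonal i, PowerSeries.coeff p.1 f * PowerSeries.coeff p.2 g| * z ^ i
      ≤ (∑ p ∈ antidiagonal i, |PowerSeries.coeff p.1 f * PowerSeries.coeff p.2 g|) * z ^ i :=
        mul_le_mul_of_nonneg_right (abs_sum_le_sum_abs _ _) (by positivity)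
    _ = _ := by
        rw [sum_mul]
        refine sum_congr rfl fun p hp => ?_
        rw [abs_mul, ← mem_antidiagonal.1 hp, pow_add]; ring

lemma tn_inv (K : ℕ) (z : ℝ) (hz : 0 ≤ z) (r : PowerSeries ℝ)
    (hr : PowerSeries.constantCoeff r = 1) (δ : ℝ) (hδ : δ < 1) (h : tn K z (r - 1) ≤ δ) :
    tn K z r⁻¹ * (1 - δ) ≤ 1 := by
  have hv : r * r⁻¹ = 1 := PowerSeries.mul_inv_cancel r (by rw [hr]; exact one_ne_zero)
  have hv2 : r⁻¹ = 1 + (-(r - 1)) * r⁻¹ := by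
    linear_combination hv
  have hneg : tn K z (-(r - 1)) = tn K z (r - 1) := by
    unfold tn; simp only [map_neg, abs_neg]
  have h1 : tn K z r⁻¹ ≤ 1 + δ * tn K z r⁻¹ := by
    calc tn K z r⁻¹ = tn K z (1 + (-(r - 1)) * r⁻¹) := by rw [← hv2]
      _ ≤ tn K z 1 + tn K z ((-(r - 1)) * r⁻¹) := tn_add _ _ hz _ _
      _ ≤ 1 + δ * tn K z r⁻¹ := by
        refine add_le_add (tn_one _ _) ((tn_mul _ _ hz _ _).trans ?_)
        rw [hneg]
        exact mul_le_mul_of_nonneg_right h (tn_nonneg _ _ hz _)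
  linarith

/-- `exp(bX) - 1` -/
def D1 (b : ℝ) : PowerSeries ℝ := PowerSeries.rescale b (PowerSeries.exp ℝ) - 1

lemma coeff_D (b : ℝ) (i : ℕ) :
    PowerSeries.coeff i (PowerSeries.rescale b (PowerSeries.exp ℝ)) = b ^ i / (i.factorial : ℝ) := by
  rw [PowerSeries.coeff_rescale, PowerSeries.coeff_exp]
  simp [div_eq_mul_inv]

lemma coeff_D1_zero (b : ℝ) : PowerSeries.coeff 0 (D1 b) = 0 := by
  unfold D1; rw [map_sub, coeff_D]; simp

lemma coeff_D1_succ (b : ℝ) (i : ℕ) :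
    PowerSeries.coeff (i + 1) (D1 b) = b ^ (i + 1) / ((i + 1).factorial : ℝ) := by
  unfold D1; rw [map_sub, coeff_D]; simp [PowerSeries.coeff_one]

lemma coeff_D1_nonneg (b : ℝ) (hb : 0 ≤ b) (i : ℕ) : 0 ≤ PowerSeries.coeff i (D1 b) := by
  rcases i with _ | i
  · rw [coeff_D1_zero]
  · rw [coeff_D1_succ]; positivity

/-- `exp(bX) - 1 - bX` -/
def D2 (b : ℝ) : PowerSeries ℝ := PowerSeries.mk fun i => if i < 2 then 0 else b ^ i / (i.factorial : ℝ)

lemma tn_D2 (K : ℕ) (z b : ℝ) (hz : 0 ≤ z) (hb : 0 ≤ b) (h : b * z ≤ 1) :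
    tn K z (D2 b) ≤ (b * z) ^ 2 := by
  have hx : 0 ≤ b * z := by positivity
  have h1 : tn K z (D2 b) ≤ tn (K + 2) z (D2 b) := by
    unfold tn
    refine sum_le_sum_of_subset_of_nonneg (fun x hx => ?_) fun a _ _ => by positivity
    rw [mem_range] at hx ⊢; omega
  refine h1.trans ?_
  have h2 := Real.sum_le_exp_of_nonneg hx (K + 2)
  have h3 := Real.abs_exp_sub_one_sub_id_le (x := b * z) (by rwa [abs_of_nonneg hx])
  have h4 := (abs_le.1 h3).2
  have e1 : tn (K + 2) z (D2 b) = ∑ i ∈ range K, (b * z) ^ (i + 1 + 1) / ((i + 1 + 1).factorial : ℝ) := by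
    unfold tn
    rw [sum_range_succ', sum_range_succ']
    simp only [D2, PowerSeries.coeff_mk]
    norm_num
    refine sum_congr rfl fun i _ => ?_
    rw [abs_of_nonneg (by positivity), mul_pow]; ring
  rw [sum_range_succ', sum_range_succ'] at h2
  rw [e1]
  norm_num at h2
  have : ∀ i ∈ range K, (b * z) ^ (i + 1 + 1) / ((i + 1 + 1).factorial : ℝ) = (b * z) ^ (i + 1 + 1) / ((i + 1 + 1).factorial : ℝ) := fun _ _ => rfl
  linarith

lemma tn_D1 (K : ℕ) (z b : ℝ) (hz : 0 ≤ z) (hb : 0 ≤ b) (h : b * z ≤ 1) :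
    tn K z (D1 b) ≤ b * z + (b * z) ^ 2 := by
  have hx : 0 ≤ b * z := by positivity
  have e : D1 b = PowerSeries.monomial 1 b + D2 b := by
    ext i
    rcases i with _ | _ | i
    · rw [coeff_D1_zero, map_add, PowerSeries.coeff_monomial]; simp [D2]
    · rw [coeff_D1_succ, map_add, PowerSeries.coeff_monomial]; simp [D2]
    · rw [coeff_D1_succ, map_add, PowerSeries.coeff_monomial]; simp [D2]
  rw [e]
  refine (tn_add _ _ hz _ _).trans (add_le_add ?_ (tn_D2 K z b hz hb h))
  unfold tn
  have : ∀ i ∈ range K, |PowerSeries.coeff i (PowerSeries.monomial 1 b)| * z ^ i =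
      if i = 1 then b * z else 0 := by
    intro i _
    rw [PowerSeries.coeff_monomial]
    split_ifs with h
    · rw [h, abs_of_nonneg hb, pow_one]
    · simp
  rw [sum_congr rfl this, sum_ite_eq']
  split_ifs <;> linarith

lemma sub_add_swap {X : Type*} [MeasurableSpace X] (μ ν : Measure X) [IsFiniteMeasure μ]
    [IsFiniteMeasure ν] : μ + (ν - μ) = ν + (μ - ν) := by
  have h := Measure.sub_toSignedMeasure_eq_toSignedMeasure_sub (μ := μ) (ν := ν)
  rw [sub_eq_sub_iff_add_eq_add] at h
  have h2 : (μ + (ν - μ)).toSignedMeasure = (ν + (μ - ν)).toSignedMeasure := by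
    rw [Measure.toSignedMeasure_add, Measure.toSignedMeasure_add, h, add_comm]
  exact Measure.toSignedMeasure_eq_toSignedMeasure_iff.1 h2

lemma young_pow (v lam b : ℝ) (hv : 0 ≤ v) (hl : 0 < lam) (hb0 : 0 ≤ b) (hb1 : b ≤ 1) :
    v ^ b ≤ lam ^ b * ((1 - b) + b * (v / lam)) := by
  have h := Real.geom_mean_le_arith_mean2_weighted hb0 (by linarith : 0 ≤ 1 - b)
    (div_nonneg hv hl.le) zero_le_one (by ring)
  rw [Real.one_rpow, mul_one, Real.div_rpow hv hl.le] at h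
  have hlb : 0 < lam ^ b := Real.rpow_pos_of_pos hl b
  rw [div_le_iff₀ hlb] at h
  nlinarith

/-- Interpolated weighted total variation bound. -/
lemma wTV_interp {X : Type*} [MeasurableSpace X] (μ ν : Measure X) [IsProbabilityMeasure μ]
    [IsProbabilityMeasure ν] (V : X → ℝ) (hV : Measurable V) (hV1 : ∀ x, 1 ≤ V x)
    (hμ : Integrable V μ) (hν : Integrable V ν) (M b cf : ℝ) (hM : 0 < M)
    (hw : wTV V μ ν ≤ M) (hb0 : 0 ≤ b) (hb1 : b ≤ 1) (hcf : 0 ≤ cf)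
    (f : X → ℝ) (hf : Measurable f) (hfμ : ∀ᵐ x ∂μ, |f x| ≤ cf * V x ^ b)
    (hfν : ∀ᵐ x ∂ν, |f x| ≤ cf * V x ^ b) :
    |(∫ x, f x ∂μ) - ∫ x, f x ∂ν| ≤ cf * (2 ^ (1 - b) * M ^ b) := by
  have hVb : ∀ x, V x ^ b ≤ V x := fun x => by
    simpa using Real.rpow_le_rpow_of_exponent_le (hV1 x) hb1
  have hVb0 : ∀ x, 0 ≤ V x ^ b := fun x => Real.rpow_nonneg (by linarith [hV1 x]) b
  have key : ∀ η : Measure X, Integrable V η → (∀ᵐ x ∂η, |f x| ≤ cf * V x ^ b) →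
      Integrable f η := by
    intro η h1 h2
    refine (h1.const_mul cf).mono' hf.aestronglyMeasurable ?_
    filter_upwards [h2] with x hx
    rw [Real.norm_eq_abs]
    exact hx.trans (mul_le_mul_of_nonneg_left (hVb x) hcf)
  have l1 : μ - ν ≤ μ := Measure.sub_le
  have l2 : ν - μ ≤ ν := Measure.sub_le
  have i1 := hμ.mono_measure l1
  have i2 := hν.mono_measure l2
  have a1 := (Measure.absolutelyContinuous_of_le l1).ae_le hfμ
  have a2 := (Measure.absolutelyContinuous_of_le l2).ae_le hfν
  have j1 := key _ i1 a1
  have j2 := key _ i2 a2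
  have jμ := key _ hμ hfμ
  have jν := key _ hν hfν
  have hsum : (∫ x, f x ∂μ) + ∫ x, f x ∂(ν - μ) = (∫ x, f x ∂ν) + ∫ x, f x ∂(μ - ν) := by
    rw [← integral_add_measure jμ j2, ← integral_add_measure jν j1, sub_add_swap]
  have bound : ∀ η : Measure X, IsFiniteMeasure η → Integrable V η → η.real Set.univ ≤ 1 →
      (∀ᵐ x ∂η, |f x| ≤ cf * V x ^ b) →
      |∫ x, f x ∂η| ≤ cf * ((M / 2) ^ b * ((1 - b) + b * ((∫ x, V x ∂η) / (M / 2)))) := by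
    intro η hη h1 hone h2
    have hI : Integrable (fun x => cf * ((M / 2) ^ b * ((1 - b) + b * (V x / (M / 2))))) η :=
      ((((integrable_const (1 - b)).add ((h1.div_const (M / 2)).const_mul b))).const_mul
        ((M / 2) ^ b)).const_mul cf
    have h3 : |∫ x, f x ∂η| ≤ ∫ x, cf * ((M / 2) ^ b * ((1 - b) + b * (V x / (M / 2)))) ∂η := by
      rw [← Real.norm_eq_abs]
      refine norm_integral_le_of_norm_le hI ?_
      filter_upwards [h2] with x hx
      rw [Real.norm_eq_abs]
      exact hx.trans (mul_le_mul_of_nonneg_left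
        (young_pow (V x) (M / 2) b (by linarith [hV1 x]) (by linarith) hb0 hb1) hcf)
    refine h3.trans ?_
    rw [integral_const_mul, integral_const_mul, integral_add (integrable_const _)
      ((h1.div_const (M / 2)).const_mul b), integral_const_mul, integral_div, integral_const]
    have : 0 ≤ (M / 2) ^ b := Real.rpow_nonneg (by linarith) b
    refine mul_le_mul_of_nonneg_left (mul_le_mul_of_nonneg_left ?_ this) hcf
    have : η.real Set.univ • (1 - b) ≤ 1 - b := by
      rw [smul_eq_mul]; nlinarith
    linarith
  have o1 : (μ - ν).real Set.univ ≤ 1 := by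
    have := ENNReal.toReal_mono (by simp) (l1 Set.univ)
    simpa [Measure.real] using this
  have o2 : (ν - μ).real Set.univ ≤ 1 := by
    have := ENNReal.toReal_mono (by simp) (l2 Set.univ)
    simpa [Measure.real] using this
  have b1 := bound _ (isFiniteMeasure_of_le μ l1) i1 o1 a1
  have b2 := bound _ (isFiniteMeasure_of_le ν l2) i2 o2 a2
  have hMb : (2 : ℝ) ^ (1 - b) * M ^ b = 2 * (M / 2) ^ b := by
    rw [Real.rpow_sub (by norm_num), Real.rpow_one, Real.div_rpow hM.le (by norm_num)]
    ring
  rw [hMb]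
  have hp : 0 ≤ (M / 2) ^ b := Real.rpow_nonneg (by linarith) b
  have hdiff : (∫ x, f x ∂μ) - ∫ x, f x ∂ν = (∫ x, f x ∂(μ - ν)) - ∫ x, f x ∂(ν - μ) := by
    linarith
  rw [hdiff]
  refine (abs_sub _ _).trans ((add_le_add b1 b2).trans ?_)
  rw [← mul_add, ← mul_add]
  refine mul_le_mul_of_nonneg_left ?_ hcf
  rw [mul_comm (2:ℝ)]
  refine mul_le_mul_of_nonneg_left ?_ hp
  have : ((∫ x, V x ∂(μ - ν)) / (M / 2)) + (∫ x, V x ∂(ν - μ)) / (M / 2) ≤ 2 := by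
    rw [← add_div, div_le_iff₀ (by linarith)]
    unfold wTV at hw
    linarith
  nlinarith

instance kIter_markov {Y : Type*} [MeasurableSpace Y] (Q : Kernel Y Y) [IsMarkovKernel Q] (n : ℕ) :
    IsMarkovKernel (kIter Q n) := by
  induction n with
  | zero => simp only [kIter]; infer_instance
  | succ n ih => simp only [kIter]; infer_instance

lemma kIter_comm {Y : Type*} [MeasurableSpace Y] (Q : Kernel Y Y) (n : ℕ) :
    (kIter Q n).comp Q = Q.comp (kIter Q n) := by
  induction n with
  | zero => simp [kIter]
  | succ n ih =>
    simp only [kIter]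
    rw [← Kernel.comp_assoc, ← ih]

lemma kIter_inv {Y : Type*} [MeasurableSpace Y] (Q : Kernel Y Y) (π : Measure Y)
    (h : π.bind (fun x => Q x) = π) (n : ℕ) : π.bind (fun x => kIter Q n x) = π := by
  have h' : Q ∘ₘ π = π := h
  change (kIter Q n) ∘ₘ π = π
  induction n with
  | zero => simp [kIter]
  | succ n ih => simp only [kIter]; rw [← Measure.comp_assoc, h', ih]

/-- Bundled working hypotheses. -/
structure Setup {X : Type*} [MeasurableSpace X] (Q : Kernel X X) (V : X → ℝ) (c ρ : ℝ)
    (π : Measure X) : Prop where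
  hV : Measurable V
  hVe : ∀ x, Real.exp 1 ≤ V x
  hinv : π.bind (fun x => Q x) = π
  hpiV : Integrable V π
  hc : 1 ≤ c
  hρ0 : 0 < ρ
  hρ1 : ρ < 1
  herg : ∀ ξ : Measure X, IsProbabilityMeasure ξ → Integrable V ξ → ∀ k : ℕ,
      wTV V (ξ.bind (fun x => (kIter Q k) x)) π ≤
        c * ((∫ x, V x ∂ξ) + ∫ x, V x ∂π) * ρ ^ k

section
variable {X : Type*} [MeasurableSpace X] {Q : Kernel X X} [IsMarkovKernel Q] {V : X → ℝ} {c ρ : ℝ}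
    {π : Measure X} [IsProbabilityMeasure π]

lemma Setup.V1 (S : Setup Q V c ρ π) (x : X) : 1 ≤ V x :=
  (Real.one_le_exp zero_le_one).trans (S.hVe x)

lemma Setup.piV_ge (S : Setup Q V c ρ π) : Real.exp 1 ≤ ∫ x, V x ∂π := by
  have := integral_mono (integrable_const (Real.exp 1)) S.hpiV (fun x => S.hVe x)
  simpa using this

lemma Setup.ae_iter (S : Setup Q V c ρ π) (s : ℕ) {p : X → Prop} (h : ∀ᵐ x ∂π, p x) :
    ∀ᵐ x ∂π, ∀ᵐ y ∂(kIter Q s x), p y := by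
  rw [← kIter_inv Q π S.hinv s] at h
  exact Measure.ae_ae_of_ae_comp h

lemma Setup.ae_Q (S : Setup Q V c ρ π) {p : X → Prop} (h : ∀ᵐ x ∂π, p x) :
    ∀ᵐ x ∂π, ∀ᵐ y ∂(Q x), p y := by
  rw [← S.hinv] at h
  exact Measure.ae_ae_of_ae_comp h

lemma Setup.ae_integrable_iter (S : Setup Q V c ρ π) (s : ℕ) :
    ∀ᵐ x ∂π, Integrable V (kIter Q s x) := by
  have h := S.hpiV
  rw [← kIter_inv Q π S.hinv s] at h
  exact Measure.ae_integrable_of_integrable_comp h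

lemma Setup.iter_bound (S : Setup Q V c ρ π) (s : ℕ) (b cf : ℝ) (hb0 : 0 ≤ b) (hb1 : b ≤ 1)
    (hcf : 0 ≤ cf) (f : X → ℝ) (hf : Measurable f) (hfb : ∀ᵐ x ∂π, |f x| ≤ cf * V x ^ b) :
    ∀ᵐ x ∂π, |(∫ y, f y ∂(kIter Q s x)) - ∫ y, f y ∂π| ≤
      cf * (2 ^ (1 - b) * ((2 * c * ∫ y, V y ∂π) * V x * ρ ^ s) ^ b) := by
  filter_upwards [S.ae_integrable_iter s, S.ae_iter s hfb] with x hx1 hx2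
  have hpi := S.piV_ge
  have he : 1 ≤ Real.exp 1 := Real.one_le_exp zero_le_one
  have hc := S.hc
  have hVx := S.V1 x
  have hρs : 0 < ρ ^ s := pow_pos S.hρ0 s
  refine wTV_interp _ _ V S.hV S.V1 hx1 S.hpiV _ b cf ?_ ?_ hb0 hb1 hcf f hf hx2 hfb
  · have : 0 < ∫ y, V y ∂π := by linarith
    positivity
  · have hd := S.herg (Measure.dirac x) inferInstance
      (integrable_dirac' S.hV.stronglyMeasurable (by simp)) s
    rw [Measure.dirac_bind (kIter Q s).measurable, integral_dirac' _ _ S.hV.stronglyMeasurable] at hd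
    refine hd.trans (mul_le_mul_of_nonneg_right ?_ hρs.le)
    have : V x + ∫ y, V y ∂π ≤ 2 * (∫ y, V y ∂π) * V x := by nlinarith
    nlinarith
end

/-- Functions dominated by every small power of `V`. -/
def Slow {X : Type*} [MeasurableSpace X] (V : X → ℝ) (π : Measure X) (f : X → ℝ) : Prop :=
  Measurable f ∧ ∀ K : ℕ, 1 ≤ K → ∃ c : ℝ, 0 ≤ c ∧ ∀ᵐ x ∂π, |f x| ≤ c * V x ^ (1 / (K : ℝ))

section
variable {X : Type*} [MeasurableSpace X] {Q : Kernel X X} [IsMarkovKernel Q] {V : X → ℝ} {c ρ : ℝ}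
    {π : Measure X} [IsProbabilityMeasure π]

lemma Slow.const (S : Setup Q V c ρ π) (a : ℝ) : Slow V π (fun _ => a) := by
  refine ⟨measurable_const, fun K _ => ⟨|a|, abs_nonneg _, ae_of_all _ fun x => ?_⟩⟩
  have : 1 ≤ V x ^ (1 / (K : ℝ)) := Real.one_le_rpow (S.V1 x) (by positivity)
  nlinarith [abs_nonneg a]

lemma Slow.add {f g : X → ℝ} (hf : Slow V π f) (hg : Slow V π g) :
    Slow V π (fun x => f x + g x) := by
  refine ⟨hf.1.add hg.1, fun K hK => ?_⟩
  obtain ⟨a, ha, h1⟩ := hf.2 K hK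
  obtain ⟨b, hb, h2⟩ := hg.2 K hK
  refine ⟨a + b, by positivity, ?_⟩
  filter_upwards [h1, h2] with x h1 h2
  rw [add_mul]
  exact (abs_add_le _ _).trans (add_le_add h1 h2)

lemma Slow.mul (S : Setup Q V c ρ π) {f g : X → ℝ} (hf : Slow V π f) (hg : Slow V π g) :
    Slow V π (fun x => f x * g x) := by
  refine ⟨hf.1.mul hg.1, fun K hK => ?_⟩
  obtain ⟨a, ha, h1⟩ := hf.2 (2 * K) (by omega)
  obtain ⟨b, hb, h2⟩ := hg.2 (2 * K) (by omega)
  refine ⟨a * b, by positivity, ?_⟩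
  filter_upwards [h1, h2] with x h1 h2
  have hV0 : 0 < V x := by linarith [S.V1 x]
  have hK0 : (0 : ℝ) < K := by exact_mod_cast hK
  have : V x ^ (1 / (K : ℝ)) = V x ^ (1 / ((2 * K : ℕ) : ℝ)) * V x ^ (1 / ((2 * K : ℕ) : ℝ)) := by
    rw [← Real.rpow_add hV0]; congr 1; push_cast; field_simp; norm_num
  rw [this, abs_mul]
  calc |f x| * |g x| ≤ (a * V x ^ (1 / ((2 * K : ℕ) : ℝ))) * (b * V x ^ (1 / ((2 * K : ℕ) : ℝ))) :=
        mul_le_mul h1 h2 (abs_nonneg _) (by positivity)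
    _ = _ := by ring

lemma Slow.const_mul (S : Setup Q V c ρ π) {f : X → ℝ} (a : ℝ) (hf : Slow V π f) :
    Slow V π (fun x => a * f x) := Slow.mul S (Slow.const S a) hf

lemma Slow.sub (S : Setup Q V c ρ π) {f g : X → ℝ} (hf : Slow V π f) (hg : Slow V π g) :
    Slow V π (fun x => f x - g x) := by
  have := hf.add (hg.const_mul S (-1))
  simpa [sub_eq_add_neg] using this

lemma Slow.sum (S : Setup Q V c ρ π) {ι : Type*} (s : Finset ι) (f : ι → X → ℝ)
    (h : ∀ i ∈ s, Slow V π (f i)) : Slow V π (fun x => ∑ i ∈ s, f i x) := by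
  induction s using Finset.induction_on with
  | empty => simpa using Slow.const S 0
  | insert a s ha ih =>
    simp only [sum_insert ha]
    exact (h a (mem_insert_self _ _)).add (ih fun i hi => h i (mem_insert_of_mem hi))

lemma Slow.pow (S : Setup Q V c ρ π) {f : X → ℝ} (hf : Slow V π f) (n : ℕ) :
    Slow V π (fun x => f x ^ n) := by
  induction n with
  | zero => simpa using Slow.const S 1
  | succ n ih => simp only [pow_succ]; exact ih.mul S hf

lemma Slow.abs {f : X → ℝ} (hf : Slow V π f) : Slow V π (fun x => |f x|) := by
  refine ⟨hf.1.abs, fun K hK => ?_⟩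
  obtain ⟨a, ha, h1⟩ := hf.2 K hK
  exact ⟨a, ha, by simpa using h1⟩

lemma Slow.integrable_of {f : X → ℝ} (S : Setup Q V c ρ π) (hf : Slow V π f) {μ : Measure X}
    (hV : Integrable V μ) (h : ∀ a : ℝ, (∀ᵐ x ∂π, |f x| ≤ a * V x) → ∀ᵐ x ∂μ, |f x| ≤ a * V x) :
    Integrable f μ := by
  obtain ⟨a, ha, h1⟩ := hf.2 1 le_rfl
  simp at h1
  exact (hV.const_mul a).mono' hf.1.aestronglyMeasurable (h a h1)

lemma Slow.integrable {f : X → ℝ} (S : Setup Q V c ρ π) (hf : Slow V π f) : Integrable f π :=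
  hf.integrable_of S S.hpiV fun _ h => h

lemma Slow.ae_int_iter {f : X → ℝ} (S : Setup Q V c ρ π) (hf : Slow V π f) (s : ℕ) :
    ∀ᵐ x ∂π, Integrable f (kIter Q s x) := by
  have h := hf.integrable S
  rw [← kIter_inv Q π S.hinv s] at h
  exact Measure.ae_integrable_of_integrable_comp h

lemma kIter_one : kIter Q 1 = Q := by simp [kIter]

lemma Slow.ae_int_Q {f : X → ℝ} (S : Setup Q V c ρ π) (hf : Slow V π f) :
    ∀ᵐ x ∂π, Integrable f (Q x) := by
  have := hf.ae_int_iter S 1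
  rwa [kIter_one] at this

lemma meas_Q {f : X → ℝ} (hf : Measurable f) : Measurable (fun x => ∫ y, f y ∂(Q x)) :=
  (StronglyMeasurable.integral_kernel (κ := Q) hf.stronglyMeasurable).measurable

lemma Slow.Qf {f : X → ℝ} (S : Setup Q V c ρ π) (hf : Slow V π f) :
    Slow V π (fun x => ∫ y, f y ∂(Q x)) := by
  refine ⟨meas_Q hf.1, fun K hK => ?_⟩
  obtain ⟨a, ha, h1⟩ := hf.2 K hK
  have hK0 : (1 : ℝ) ≤ K := by exact_mod_cast hK
  have h2 := S.iter_bound 1 (1 / (K : ℝ)) a (by positivity) (by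
    rw [div_le_one (by positivity)]; exact hK0) ha f hf.1 h1
  rw [kIter_one] at h2
  have hc := S.hc
  have hp := S.piV_ge
  have hp0 : 0 < ∫ y, V y ∂π := lt_of_lt_of_le (Real.exp_pos 1) hp
  have hρ := S.hρ0
  refine ⟨|∫ y, f y ∂π| + a * (2 ^ (1 - 1 / (K : ℝ)) * (2 * c * (∫ y, V y ∂π) * ρ ^ 1) ^ (1 / (K : ℝ))),
    by positivity, ?_⟩
  filter_upwards [h2] with x h2
  have hV0 : 0 < V x := by linarith [S.V1 x]
  have h3 : 1 ≤ V x ^ (1 / (K : ℝ)) := Real.one_le_rpow (S.V1 x) (by positivity)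
  have e : (2 * c * (∫ y, V y ∂π) * V x * ρ ^ 1) ^ (1 / (K : ℝ)) =
      (2 * c * (∫ y, V y ∂π) * ρ ^ 1) ^ (1 / (K : ℝ)) * V x ^ (1 / (K : ℝ)) := by
    rw [← Real.mul_rpow (by positivity) hV0.le]; congr 1; ring
  rw [e] at h2
  have h4 : |∫ y, f y ∂(Q x)| ≤ |∫ y, f y ∂π| + |(∫ y, f y ∂(Q x)) - ∫ y, f y ∂π| := by
    have := abs_add_le (∫ y, f y ∂π) ((∫ y, f y ∂(Q x)) - ∫ y, f y ∂π)
    simpa using this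
  rw [add_mul]
  have h5 : |∫ y, f y ∂π| ≤ |∫ y, f y ∂π| * V x ^ (1 / (K : ℝ)) := by
    nlinarith [abs_nonneg (∫ y, f y ∂π)]
  linarith

lemma Slow.int_Q {f : X → ℝ} (S : Setup Q V c ρ π) (hf : Slow V π f) :
    ∫ x, (∫ y, f y ∂(Q x)) ∂π = ∫ y, f y ∂π := by
  have h := hf.integrable S
  have e : Q ∘ₘ π = π := S.hinv
  have h' : Integrable f (Q ∘ₘ π) := by rwa [e]
  have k : (Q.comp (Kernel.const Unit π)) () = π := by
    rw [Kernel.comp_apply, Kernel.const_apply]; exact e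
  have h2 : Integrable f ((Q.comp (Kernel.const Unit π)) ()) := by rwa [k]
  have := Kernel.integral_comp h2
  rw [k, Kernel.const_apply] at this
  exact this.symm

/-- iterates: `∫ (Qf) d(Q^s x) = ∫ f d(Q^(s+1) x)` a.e. -/
lemma Slow.iter_Q {f : X → ℝ} (S : Setup Q V c ρ π) (hf : Slow V π f) (s : ℕ) :
    ∀ᵐ x ∂π, ∫ z, (∫ y, f y ∂(Q z)) ∂(kIter Q s x) = ∫ y, f y ∂(kIter Q (s + 1) x) := by
  filter_upwards [hf.ae_int_iter S (s + 1)] with x hx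
  have e : kIter Q (s + 1) = Q.comp (kIter Q s) := kIter_comm Q s
  rw [e] at hx ⊢
  rw [Kernel.integral_comp hx]
end

/-- power-series valued slow functions -/
def SlowP {X : Type*} [MeasurableSpace X] (V : X → ℝ) (π : Measure X) (T : X → PowerSeries ℝ) : Prop :=
  ∀ i, Slow V π (fun x => PowerSeries.coeff i (T x))

section
variable {X : Type*} [MeasurableSpace X] {Q : Kernel X X} [IsMarkovKernel Q] {V : X → ℝ} {c ρ : ℝ}
    {π : Measure X} [IsProbabilityMeasure π]

lemma SlowP.const (S : Setup Q V c ρ π) (f : PowerSeries ℝ) : SlowP V π (fun _ => f) :=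
  fun _ => Slow.const S _

lemma SlowP.add {T U : X → PowerSeries ℝ} (hT : SlowP V π T) (hU : SlowP V π U) :
    SlowP V π (fun x => T x + U x) := fun i => by
  simp only [map_add]; exact (hT i).add (hU i)

lemma SlowP.sub (S : Setup Q V c ρ π) {T U : X → PowerSeries ℝ} (hT : SlowP V π T)
    (hU : SlowP V π U) : SlowP V π (fun x => T x - U x) := fun i => by
  simp only [map_sub]; exact (hT i).sub S (hU i)

lemma SlowP.mul (S : Setup Q V c ρ π) {T U : X → PowerSeries ℝ} (hT : SlowP V π T)
    (hU : SlowP V π U) : SlowP V π (fun x => T x * U x) := fun i => by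
  simp only [PowerSeries.coeff_mul]
  exact Slow.sum S _ _ fun p _ => (hT p.1).mul S (hU p.2)

lemma SlowP.exp (S : Setup Q V c ρ π) {g : X → ℝ} (hg : Slow V π g) :
    SlowP V π (fun x => PowerSeries.rescale (g x) (PowerSeries.exp ℝ)) := fun i => by
  simp only [coeff_D]
  have := (hg.pow S i).const_mul S (1 / (i.factorial : ℝ))
  refine (by convert this using 2 with x; ring)

/-- coefficientwise integral against a measure -/
def intS (μ : Measure X) (T : X → PowerSeries ℝ) : PowerSeries ℝ :=
  PowerSeries.mk fun i => ∫ y, PowerSeries.coeff i (T y) ∂μ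

lemma coeff_intS (μ : Measure X) (T : X → PowerSeries ℝ) (i : ℕ) :
    PowerSeries.coeff i (intS μ T) = ∫ y, PowerSeries.coeff i (T y) ∂μ := by
  simp [intS]

lemma SlowP.QS (S : Setup Q V c ρ π) {T : X → PowerSeries ℝ} (hT : SlowP V π T) :
    SlowP V π (fun x => intS (Q x) T) := fun i => by
  simp only [coeff_intS]; exact (hT i).Qf S
end

section
variable {X : Type*} [MeasurableSpace X]

/-- `T = e^{g X} (1 + P)` -/
def tS (g : X → ℝ) (P : X → PowerSeries ℝ) (x : X) : PowerSeries ℝ :=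
  PowerSeries.rescale (g x) (PowerSeries.exp ℝ) * (1 + P x)

/-- the corrector series -/
def pS (Q : Kernel X X) (π : Measure X) (g : X → ℝ) : ℕ → X → PowerSeries ℝ
  | 0 => fun _ => 0
  | m + 1 => fun x => (intS π (tS g (pS Q π g m)))⁻¹ *
      (intS (Q x) (tS g (pS Q π g m)) - intS π (tS g (pS Q π g m)))

/-- the normalising series -/
def rS (Q : Kernel X X) (π : Measure X) (g : X → ℝ) (m : ℕ) : PowerSeries ℝ :=
  intS π (tS g (pS Q π g m))

variable {Q : Kernel X X} [IsMarkovKernel Q] {V : X → ℝ} {c ρ : ℝ}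
    {π : Measure X} [IsProbabilityMeasure π] {g : X → ℝ}

lemma coeff_zero_tS (P : X → PowerSeries ℝ) (h : ∀ x, PowerSeries.coeff 0 (P x) = 0) (x : X) :
    PowerSeries.coeff 0 (tS g P x) = 1 := by
  unfold tS
  rw [PowerSeries.coeff_mul]
  simp [coeff_D, h x]

lemma coeff_zero_pS (m : ℕ) (x : X) : PowerSeries.coeff 0 (pS Q π g m x) = 0 := by
  induction m generalizing x with
  | zero => simp [pS]
  | succ m ih =>
    simp only [pS]
    rw [PowerSeries.coeff_mul]
    simp [coeff_intS, coeff_zero_tS _ ih]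

lemma const_rS (m : ℕ) : PowerSeries.constantCoeff (rS Q π g m) = 1 := by
  rw [← PowerSeries.coeff_zero_eq_constantCoeff_apply]
  unfold rS
  rw [coeff_intS]
  simp [coeff_zero_tS _ (coeff_zero_pS m)]

lemma QT_eq (m : ℕ) (x : X) : intS (Q x) (tS g (pS Q π g m)) = rS Q π g m * (1 + pS Q π g (m + 1) x) := by
  have hv : rS Q π g m * (rS Q π g m)⁻¹ = 1 :=
    PowerSeries.mul_inv_cancel _ (by rw [const_rS]; exact one_ne_zero)
  simp only [pS]
  change _ = rS Q π g m * (1 + (rS Q π g m)⁻¹ * (intS (Q x) (tS g (pS Q π g m)) - rS Q π g m))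
  linear_combination (-(intS (Q x) (tS g (pS Q π g m)) - rS Q π g m)) * hv

lemma slow_tS (S : Setup Q V c ρ π) (hg : Slow V π g) {P : X → PowerSeries ℝ} (hP : SlowP V π P) :
    SlowP V π (tS g P) :=
  (SlowP.exp S hg).mul S ((SlowP.const S 1).add hP)

lemma slow_pS (S : Setup Q V c ρ π) (hg : Slow V π g) (m : ℕ) : SlowP V π (pS Q π g m) := by
  induction m with
  | zero => exact SlowP.const S 0
  | succ m ih =>
    exact (SlowP.const S _).mul S (SlowP.sub S (SlowP.QS S (slow_tS S hg ih)) (SlowP.const S _))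
end

/-- `f` is slow and its iterates decay geometrically, with weight `V ^ e`. -/
def Nb {X : Type*} [MeasurableSpace X] (Q : Kernel X X) (V : X → ℝ) (π : Measure X) (q e a : ℝ)
    (f : X → ℝ) : Prop :=
  Slow V π f ∧ 0 ≤ a ∧ ∀ s : ℕ, ∀ᵐ x ∂π, |∫ y, f y ∂(kIter Q s x)| ≤ a * q ^ s * V x ^ e

section
variable {X : Type*} [MeasurableSpace X] {Q : Kernel X X} [IsMarkovKernel Q] {V : X → ℝ} {c ρ : ℝ}
    {π : Measure X} [IsProbabilityMeasure π] {q e e' a a' : ℝ} {f f' : X → ℝ}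

lemma Slow.congr (hf : Slow V π f) (hm : Measurable f') (h : ∀ᵐ x ∂π, f x = f' x) : Slow V π f' := by
  refine ⟨hm, fun K hK => ?_⟩
  obtain ⟨a, ha, h1⟩ := hf.2 K hK
  refine ⟨a, ha, ?_⟩
  filter_upwards [h1, h] with x h1 h2
  rwa [← h2]

lemma Nb.congr (S : Setup Q V c ρ π) (hf : Nb Q V π q e a f) (hm : Measurable f')
    (h : ∀ᵐ x ∂π, f x = f' x) : Nb Q V π q e a f' := by
  refine ⟨hf.1.congr hm h, hf.2.1, fun s => ?_⟩
  filter_upwards [hf.2.2 s, S.ae_iter s h] with x h1 h2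
  rwa [← integral_congr_ae h2]

lemma Nb.zero (S : Setup Q V c ρ π) (hq : 0 ≤ q) (ha : 0 ≤ a) : Nb Q V π q e a (fun _ => 0) := by
  refine ⟨Slow.const S 0, ha, fun s => ae_of_all _ fun x => ?_⟩
  have := S.V1 x
  have : 0 ≤ V x := by linarith
  simp; positivity

lemma Nb.add (S : Setup Q V c ρ π) (hf : Nb Q V π q e a f) (hf' : Nb Q V π q e a' f') :
    Nb Q V π q e (a + a') (fun x => f x + f' x) := by
  refine ⟨hf.1.add hf'.1, add_nonneg hf.2.1 hf'.2.1, fun s => ?_⟩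
  filter_upwards [hf.2.2 s, hf'.2.2 s, hf.1.ae_int_iter S s, hf'.1.ae_int_iter S s] with x h1 h2 h3 h4
  rw [integral_add h3 h4, add_mul, add_mul]
  exact (abs_add_le _ _).trans (add_le_add h1 h2)

lemma Nb.const_mul (S : Setup Q V c ρ π) (w : ℝ) (hf : Nb Q V π q e a f) :
    Nb Q V π q e (|w| * a) (fun x => w * f x) := by
  refine ⟨hf.1.const_mul S w, mul_nonneg (abs_nonneg _) hf.2.1, fun s => ?_⟩
  filter_upwards [hf.2.2 s] with x h1
  rw [integral_const_mul, abs_mul, mul_assoc, mul_assoc]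
  rw [mul_assoc] at h1
  exact mul_le_mul_of_nonneg_left h1 (abs_nonneg _)

lemma Nb.mono (S : Setup Q V c ρ π) (hq : 0 ≤ q) (hf : Nb Q V π q e a f) (he : e ≤ e') :
    Nb Q V π q e' a f := by
  refine ⟨hf.1, hf.2.1, fun s => ?_⟩
  filter_upwards [hf.2.2 s] with x h1
  refine h1.trans (mul_le_mul_of_nonneg_left ?_ (mul_nonneg hf.2.1 (pow_nonneg hq s)))
  exact Real.rpow_le_rpow_of_exponent_le (S.V1 x) he

lemma Nb.sum (S : Setup Q V c ρ π) (hq : 0 ≤ q) {ι : Type*} (s : Finset ι) (F : ι → X → ℝ) (A : ι → ℝ)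
    (h : ∀ i ∈ s, Nb Q V π q e (A i) (F i)) :
    Nb Q V π q e (∑ i ∈ s, A i) (fun x => ∑ i ∈ s, F i x) := by
  induction s using Finset.induction_on with
  | empty => simpa using Nb.zero S hq le_rfl
  | insert a s ha ih =>
    simp only [sum_insert ha]
    exact Nb.add S (h a (mem_insert_self _ _)) (ih fun i hi => h i (mem_insert_of_mem hi))

lemma Nb.Qf (S : Setup Q V c ρ π) (hq : 0 ≤ q) (hf : Nb Q V π q e a f) :
    Nb Q V π q e (q * a) (fun x => ∫ y, f y ∂(Q x)) := by
  refine ⟨hf.1.Qf S, mul_nonneg hq hf.2.1, fun s => ?_⟩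
  filter_upwards [hf.2.2 (s + 1), hf.1.iter_Q S s] with x h1 h2
  rw [h2]
  refine h1.trans (le_of_eq ?_)
  ring

lemma Nb.bound (hf : Nb Q V π q e a f) : ∀ᵐ x ∂π, |f x| ≤ a * V x ^ e := by
  filter_upwards [hf.2.2 0] with x h1
  simp only [kIter, Kernel.id_apply, pow_zero, mul_one] at h1
  rwa [integral_dirac' _ _ hf.1.1.stronglyMeasurable] at h1

lemma two_mul_rpow_half (C0 u : ℝ) (hC0 : 0 < C0) : 2 ^ (1 - u) * C0 ^ u = 2 * (C0 / 2) ^ u := by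
  rw [Real.div_rpow hC0.le (by norm_num), Real.rpow_sub (by norm_num), Real.rpow_one]
  ring

/-- the spectral-gap type bound -/
lemma gap (S : Setup Q V c ρ π) (K i : ℕ) (hi : 1 ≤ i) (hiK : i < K) (ha : 0 ≤ a) (hf : Slow V π f)
    (hfb : ∀ᵐ x ∂π, |f x| ≤ a * V x ^ ((i : ℝ) / K)) :
    ∀ s : ℕ, ∀ᵐ x ∂π, |(∫ y, f y ∂(kIter Q s x)) - ∫ y, f y ∂π| ≤
      (2 ^ (1 / (K : ℝ)) * (2 * c * ∫ y, V y ∂π) ^ (1 - 1 / (K : ℝ))) * a * (ρ ^ (1 / (K : ℝ))) ^ s *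
        V x ^ ((i : ℝ) / K) := by
  intro s
  have hK0 : (0 : ℝ) < K := by exact_mod_cast (by omega : 0 < K)
  have hi1 : (1 : ℝ) ≤ i := by exact_mod_cast hi
  have hiK' : (i : ℝ) + 1 ≤ K := by exact_mod_cast hiK
  filter_upwards [S.iter_bound s ((i : ℝ) / K) a (by positivity)
    (by rw [div_le_one hK0]; linarith) ha f hf.1 hfb] with x hx
  refine hx.trans ?_
  have hp := S.piV_ge
  have hp1 : 1 ≤ ∫ y, V y ∂π := (Real.one_le_exp zero_le_one).trans hp
  have hc := S.hc
  have hρ := S.hρ0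
  have hVx := S.V1 x
  have hV0 : 0 < V x := by linarith
  set C0 := 2 * c * ∫ y, V y ∂π with hC0
  have hC2 : 2 ≤ C0 := by rw [hC0]; nlinarith
  have hC0' : 0 < C0 := by linarith
  rw [Real.mul_rpow (by positivity) (by positivity), Real.mul_rpow (by positivity) (by positivity)]
  have e1 : (ρ ^ s) ^ ((i : ℝ) / K) ≤ (ρ ^ (1 / (K : ℝ))) ^ s := by
    rw [← Real.rpow_natCast (ρ ^ (1 / (K : ℝ))), ← Real.rpow_natCast ρ, ← Real.rpow_mul hρ.le,
      ← Real.rpow_mul hρ.le]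
    refine Real.rpow_le_rpow_of_exponent_ge hρ S.hρ1.le ?_
    rw [mul_comm]
    refine mul_le_mul_of_nonneg_left ?_ (by positivity)
    gcongr
  have e2 : 2 ^ (1 - (i : ℝ) / K) * C0 ^ ((i : ℝ) / K) ≤ 2 ^ (1 / (K : ℝ)) * C0 ^ (1 - 1 / (K : ℝ)) := by
    have := two_mul_rpow_half C0 (1 - 1 / (K : ℝ)) hC0'
    rw [sub_sub_cancel] at this
    rw [this, two_mul_rpow_half C0 _ hC0']
    refine mul_le_mul_of_nonneg_left ?_ (by norm_num)
    refine Real.rpow_le_rpow_of_exponent_le (by linarith) ?_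
    rw [le_sub_iff_add_le, ← add_div, div_le_one hK0]; exact hiK'
  calc a * (2 ^ (1 - (i : ℝ) / K) * (C0 ^ ((i : ℝ) / K) * V x ^ ((i : ℝ) / K) * (ρ ^ s) ^ ((i : ℝ) / K)))
      = a * V x ^ ((i : ℝ) / K) * ((2 ^ (1 - (i : ℝ) / K) * C0 ^ ((i : ℝ) / K)) * (ρ ^ s) ^ ((i : ℝ) / K)) := by
        ring
    _ ≤ a * V x ^ ((i : ℝ) / K) * ((2 ^ (1 / (K : ℝ)) * C0 ^ (1 - 1 / (K : ℝ))) * (ρ ^ (1 / (K : ℝ))) ^ s) := by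
        refine mul_le_mul_of_nonneg_left ?_ (by positivity)
        exact mul_le_mul e2 e1 (by positivity) (by positivity)
    _ = _ := by ring

lemma gap_Nb (S : Setup Q V c ρ π) (K i : ℕ) (hi : 1 ≤ i) (hiK : i < K) (ha : 0 ≤ a) (hf : Slow V π f)
    (hfb : ∀ᵐ x ∂π, |f x| ≤ a * V x ^ ((i : ℝ) / K)) :
    Nb Q V π (ρ ^ (1 / (K : ℝ))) ((i : ℝ) / K)
      (ρ ^ (1 / (K : ℝ)) * (2 ^ (1 / (K : ℝ)) * (2 * c * ∫ y, V y ∂π) ^ (1 - 1 / (K : ℝ))) * a)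
      (fun x => (∫ y, f y ∂(Q x)) - ∫ y, f y ∂π) := by
  have hp := S.piV_ge
  have hp1 : 1 ≤ ∫ y, V y ∂π := (Real.one_le_exp zero_le_one).trans hp
  have hc := S.hc
  have hρ := S.hρ0
  refine ⟨(hf.Qf S).sub S (Slow.const S _), by positivity, fun s => ?_⟩
  filter_upwards [gap S K i hi hiK ha hf hfb (s + 1), hf.iter_Q S s, (hf.Qf S).ae_int_iter S s]
    with x h1 h2 h3
  rw [integral_sub h3 (integrable_const _), h2, integral_const]
  simp only [probReal_univ, one_smul]
  refine h1.trans (le_of_eq ?_)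
  ring

end

section
variable {X : Type*} [MeasurableSpace X] {Q : Kernel X X} [IsMarkovKernel Q] {V : X → ℝ} {c ρ : ℝ}
    {π : Measure X} [IsProbabilityMeasure π] {g : X → ℝ} {b : ℝ} {K : ℕ}

lemma int_rpow_slow (S : Setup Q V c ρ π) (u : ℝ) (hu0 : 0 ≤ u) (hu1 : u ≤ 1) :
    Integrable (fun x => V x ^ u) π ∧ ∫ x, V x ^ u ∂π ≤ (∫ x, V x ∂π) ^ u := by
  have hp := S.piV_ge
  have hp1 : 0 < ∫ y, V y ∂π := lt_of_lt_of_le (Real.exp_pos 1) hp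
  have hint : Integrable (fun x => V x ^ u) π := by
    refine S.hpiV.mono' (S.hV.pow_const u).aestronglyMeasurable (ae_of_all _ fun x => ?_)
    have h1 := S.V1 x
    rw [Real.norm_eq_abs, abs_of_nonneg (by positivity)]
    calc V x ^ u ≤ V x ^ (1 : ℝ) := Real.rpow_le_rpow_of_exponent_le h1 hu1
      _ = V x := Real.rpow_one _
  refine ⟨hint, ?_⟩
  set p := ∫ y, V y ∂π with hpdef
  have h := integral_mono hint (g := fun x => p ^ u * (u / p) * V x + p ^ u * (1 - u))
    ((S.hpiV.const_mul _).add (integrable_const _))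
    (fun x => (young_pow (V x) p u (by linarith [S.V1 x]) hp1 hu0 hu1).trans (le_of_eq (by ring)))
  refine h.trans (le_of_eq ?_)
  rw [integral_add (S.hpiV.const_mul _) (integrable_const _), integral_const_mul, integral_const]
  simp only [probReal_univ, one_smul]
  rw [← hpdef]
  field_simp
  ring

lemma D1_bound (b y v : ℝ) (hv : 0 < v) (hb : 0 ≤ b) (h : |y| ≤ b * v ^ (1 / (K : ℝ))) (j : ℕ) :
    |PowerSeries.coeff j (D1 y)| ≤ PowerSeries.coeff j (D1 b) * v ^ ((j : ℝ) / K) := by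
  rcases j with _ | j
  · simp [coeff_D1_zero]
  · rw [coeff_D1_succ, coeff_D1_succ, abs_div, abs_pow, Nat.abs_cast, div_mul_eq_mul_div]
    have e : v ^ (((j + 1 : ℕ) : ℝ) / K) = (v ^ (1 / (K : ℝ))) ^ (j + 1) := by
      rw [← Real.rpow_natCast (v ^ (1 / (K : ℝ))), ← Real.rpow_mul hv.le]
      congr 1; ring
    rw [e, ← mul_pow]
    gcongr

lemma D1_mul_bound (S : Setup Q V c ρ π) (hb : 0 ≤ b)
    (hgb : ∀ᵐ x ∂π, |g x| ≤ b * V x ^ (1 / (K : ℝ))) (U : X → PowerSeries ℝ) (u : PowerSeries ℝ)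
    (hU : ∀ l < K, ∀ᵐ x ∂π, |PowerSeries.coeff l (U x)| ≤ PowerSeries.coeff l u * V x ^ ((l : ℝ) / K))
    (i : ℕ) (hi : i ≤ K) :
    ∀ᵐ x ∂π, |PowerSeries.coeff i (D1 (g x) * U x)| ≤
      PowerSeries.coeff i (D1 b * u) * V x ^ ((i : ℝ) / K) := by
  have h : ∀ᵐ x ∂π, ∀ l < K, |PowerSeries.coeff l (U x)| ≤ PowerSeries.coeff l u * V x ^ ((l : ℝ) / K) :=
    ae_all_iff.2 fun l => by
      by_cases hl : l < K
      · filter_upwards [hU l hl] with x hx _ using hx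
      · exact ae_of_all _ fun x h => absurd h hl
  filter_upwards [h, hgb] with x h1 h2
  have hV0 : 0 < V x := by linarith [S.V1 x]
  rw [PowerSeries.coeff_mul, PowerSeries.coeff_mul, sum_mul]
  refine (abs_sum_le_sum_abs _ _).trans (sum_le_sum fun p hp => ?_)
  rw [HasAntidiagonal.mem_antidiagonal] at hp
  rw [abs_mul]
  by_cases hp1 : p.1 = 0
  · simp [hp1, coeff_D1_zero]
  · have hp2 : p.2 < K := by omega
    have e : V x ^ ((i : ℝ) / K) = V x ^ ((p.1 : ℝ) / K) * V x ^ ((p.2 : ℝ) / K) := by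
      rw [← Real.rpow_add hV0, ← add_div, ← hp]; push_cast; rfl
    rw [e, mul_mul_mul_comm]
    exact mul_le_mul (D1_bound b _ _ hV0 hb h2 _) (h1 _ hp2) (abs_nonneg _)
      (mul_nonneg (coeff_D1_nonneg b hb _) (by positivity))

/-- invariant of the recursion -/
structure PInv (Q : Kernel X X) (V : X → ℝ) (π : Measure X) (q : ℝ) (K : ℕ) (P : X → PowerSeries ℝ)
    (u : PowerSeries ℝ) : Prop where
  nb : ∀ i < K, Nb Q V π q ((i : ℝ) / K) (PowerSeries.coeff i u) (fun x => PowerSeries.coeff i (P x))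
  tr : ∀ i, K ≤ i → PowerSeries.coeff i u = 0
  mean : ∀ i, ∫ x, PowerSeries.coeff i (P x) ∂π = 0
  zero : ∀ x, PowerSeries.coeff 0 (P x) = 0
  slow : SlowP V π P

lemma tS_eq (P : X → PowerSeries ℝ) (x : X) : tS g P x = 1 + P x + D1 (g x) * (1 + P x) := by
  unfold tS D1; ring

lemma slow_D1 (S : Setup Q V c ρ π) (hg : Slow V π g) : SlowP V π (fun x => D1 (g x)) :=
  SlowP.sub S (SlowP.exp S hg) (SlowP.const S 1)

lemma intD1 (S : Setup Q V c ρ π) (hg : Slow V π g) (hg0 : ∫ x, g x ∂π = 0) (hb : 0 ≤ b)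
    (hgb : ∀ᵐ x ∂π, |g x| ≤ b * V x ^ (1 / (K : ℝ))) (i : ℕ) (hi : i ≤ K) (hK : 1 ≤ K) :
    |∫ x, PowerSeries.coeff i (D1 (g x)) ∂π| ≤ PowerSeries.coeff i (D2 b) * (∫ x, V x ∂π) ^ ((i : ℝ) / K) := by
  rcases i with _ | _ | i
  · simp [coeff_D1_zero, D2]
  · simp only [zero_add]
    have : ∀ x, PowerSeries.coeff 1 (D1 (g x)) = g x := fun x => by
      have := coeff_D1_succ (g x) 0; simpa using this
    simp [this, hg0, D2]
  · have hK0 : (0 : ℝ) < K := by exact_mod_cast (by omega : 0 < K)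
    have hu1 : (((i + 2 : ℕ) : ℝ) / K) ≤ 1 := by
      rw [div_le_one hK0]; exact_mod_cast hi
    obtain ⟨j1, j2⟩ := int_rpow_slow S (((i + 2 : ℕ) : ℝ) / K) (by positivity) hu1
    have e : PowerSeries.coeff (i + 2) (D2 b) = PowerSeries.coeff (i + 2) (D1 b) := by
      rw [coeff_D1_succ]; simp [D2]
    rw [show i + 1 + 1 = i + 2 from rfl, e]
    refine abs_integral_le_integral_abs.trans ?_
    refine (integral_mono_ae (((slow_D1 S hg) _).integrable S).abs (j1.const_mul (PowerSeries.coeff (i + 2) (D1 b))) ?_).trans ?_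
    · filter_upwards [hgb] with x hx
      exact D1_bound b _ _ (by linarith [S.V1 x]) hb hx _
    · rw [integral_const_mul]
      exact mul_le_mul_of_nonneg_left j2 (coeff_D1_nonneg b hb _)

lemma r_coeff (S : Setup Q V c ρ π) (hg : Slow V π g) (hg0 : ∫ x, g x ∂π = 0) (hb : 0 ≤ b)
    (hgb : ∀ᵐ x ∂π, |g x| ≤ b * V x ^ (1 / (K : ℝ))) {q : ℝ} {P : X → PowerSeries ℝ}
    {u : PowerSeries ℝ} (hP : PInv Q V π q K P u) (i : ℕ) (hi1 : 1 ≤ i) (hi : i ≤ K) :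
    |PowerSeries.coeff i (intS π (tS g P))| ≤
      PowerSeries.coeff i (D2 b + D1 b * u) * (∫ x, V x ∂π) ^ ((i : ℝ) / K) := by
  have hK0 : (0 : ℝ) < K := by exact_mod_cast (by omega : 0 < K)
  have hu1 : ((i : ℝ) / K) ≤ 1 := by
    rw [div_le_one hK0]; exact_mod_cast hi
  have s1 : SlowP V π (fun x => D1 (g x)) := slow_D1 S hg
  have s2 : SlowP V π (fun x => D1 (g x) * P x) := SlowP.mul S s1 hP.slow
  have e1 : ∀ x, PowerSeries.coeff i (tS g P x) = PowerSeries.coeff i (P x) +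
      (PowerSeries.coeff i (D1 (g x)) + PowerSeries.coeff i (D1 (g x) * P x)) := fun x => by
    rw [tS_eq, mul_add, mul_one]
    simp only [map_add]
    rw [PowerSeries.coeff_one, if_neg (by omega)]; ring
  rw [coeff_intS]
  simp only [e1]
  have i1 := (hP.slow i).integrable S
  have i2 : Integrable (fun x => PowerSeries.coeff i (D1 (g x))) π := (s1 i).integrable S
  have i3 : Integrable (fun x => PowerSeries.coeff i (D1 (g x) * P x)) π := (s2 i).integrable S
  have i4 : Integrable (fun x => PowerSeries.coeff i (D1 (g x)) +
    PowerSeries.coeff i (D1 (g x) * P x)) π := i2.add i3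
  rw [integral_add i1 i4, integral_add i2 i3, hP.mean, zero_add, map_add, add_mul]
  refine (abs_add_le _ _).trans (add_le_add (intD1 S hg hg0 hb hgb i hi (by omega)) ?_)
  obtain ⟨j1, j2⟩ := int_rpow_slow S ((i : ℝ) / K) (by positivity) hu1
  refine abs_integral_le_integral_abs.trans ?_
  refine (integral_mono_ae i3.abs (j1.const_mul (PowerSeries.coeff i (D1 b * u)))
    (D1_mul_bound S hb hgb P u (fun l hl => (hP.nb l hl).bound) i hi)).trans ?_
  rw [integral_const_mul]
  refine mul_le_mul_of_nonneg_left j2 ?_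
  rw [PowerSeries.coeff_mul]
  refine sum_nonneg fun p _ => mul_nonneg (coeff_D1_nonneg b hb _) ?_
  by_cases h : p.2 < K
  · exact (hP.nb _ h).2.1
  · rw [hP.tr _ (by omega)]

lemma intS_sub_nb (S : Setup Q V c ρ π) (hg : Slow V π g) (hb : 0 ≤ b)
    (hgb : ∀ᵐ x ∂π, |g x| ≤ b * V x ^ (1 / (K : ℝ))) {P : X → PowerSeries ℝ}
    {u : PowerSeries ℝ} (hP : PInv Q V π (ρ ^ (1 / (K : ℝ))) K P u) (i : ℕ) (hi : i < K) :
    Nb Q V π (ρ ^ (1 / (K : ℝ))) ((i : ℝ) / K)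
      (ρ ^ (1 / (K : ℝ)) * PowerSeries.coeff i u + ρ ^ (1 / (K : ℝ)) *
        (2 ^ (1 / (K : ℝ)) * (2 * c * ∫ y, V y ∂π) ^ (1 - 1 / (K : ℝ))) *
          PowerSeries.coeff i (D1 b * (1 + u)))
      (fun x => PowerSeries.coeff i (intS (Q x) (tS g P) - intS π (tS g P))) := by
  have hp := S.piV_ge
  have hp1 : 1 ≤ ∫ y, V y ∂π := (Real.one_le_exp zero_le_one).trans hp
  have hc := S.hc
  have hρ := S.hρ0
  have hq : 0 ≤ ρ ^ (1 / (K : ℝ)) := by positivity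
  have hu0 : ∀ l, 0 ≤ PowerSeries.coeff l u := fun l => by
    by_cases h : l < K
    · exact (hP.nb _ h).2.1
    · rw [hP.tr _ (by omega)]
  have hw0 : 0 ≤ PowerSeries.coeff i (D1 b * (1 + u)) := by
    rw [PowerSeries.coeff_mul]
    refine sum_nonneg fun p _ => mul_nonneg (coeff_D1_nonneg b hb _) ?_
    rw [map_add, PowerSeries.coeff_one]
    have := hu0 p.2
    split_ifs <;> linarith
  rcases Nat.eq_zero_or_pos i with rfl | hi1
  · have : ∀ x, PowerSeries.coeff 0 (intS (Q x) (tS g P) - intS π (tS g P)) = 0 := fun x => by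
      rw [map_sub, coeff_intS, coeff_intS]
      simp [coeff_zero_tS P hP.zero]
    simp only [this]
    refine Nb.zero S hq ?_
    have := hu0 0
    positivity
  have s1 : SlowP V π (fun x => D1 (g x)) := slow_D1 S hg
  have s2 : SlowP V π (fun x => D1 (g x) * (1 + P x)) :=
    SlowP.mul S s1 (SlowP.add (SlowP.const S 1) hP.slow)
  have e1 : ∀ x, PowerSeries.coeff i (tS g P x) = PowerSeries.coeff i (P x) +
      PowerSeries.coeff i (D1 (g x) * (1 + P x)) := fun x => by
    rw [tS_eq, map_add, map_add, PowerSeries.coeff_one, if_neg (by omega)]; ring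
  have n1 := Nb.Qf S hq (hP.nb i hi)
  have n2 := gap_Nb S K i hi1 hi hw0 (s2 i) (D1_mul_bound S hb hgb (fun x => 1 + P x) (1 + u) (fun l hl => by
    filter_upwards [(hP.nb l hl).bound] with x hx
    have hV : 1 ≤ V x ^ ((l : ℝ) / K) := Real.one_le_rpow (S.V1 x) (by positivity)
    rw [map_add, map_add, add_mul]
    refine (abs_add_le _ _).trans (add_le_add ?_ hx)
    rw [PowerSeries.coeff_one]
    split_ifs <;> simp [hV]) i hi.le)
  refine (Nb.add S n1 n2).congr S ?_ ?_
  · have := (SlowP.sub S (SlowP.QS S (slow_tS S hg hP.slow)) (SlowP.const S (intS π (tS g P)))) i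
    exact this.1
  · filter_upwards [(hP.slow i).ae_int_Q S, (s2 i).ae_int_Q S] with x h1 h2
    rw [map_sub, coeff_intS, coeff_intS]
    simp only [e1]
    rw [integral_add h1 h2, integral_add ((hP.slow i).integrable S) ((s2 i).integrable S), hP.mean]
    ring
end

section
variable {X : Type*} [MeasurableSpace X] {Q : Kernel X X} [IsMarkovKernel Q] {V : X → ℝ} {c ρ : ℝ}
    {π : Measure X} [IsProbabilityMeasure π] {g : X → ℝ} {b : ℝ} {K : ℕ}

lemma a_bound (K : ℕ) (q C b z : ℝ) (u : PowerSeries ℝ) (hq0 : 0 ≤ q) (hq1 : q < 1) (hC : 1 ≤ C)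
    (hb : 0 ≤ b) (hz : 0 ≤ z) (hbz : 4 * C * (b * z) = 1 - q) (hu : tn K z u ≤ 2 / 5 * q)
    (huK : PowerSeries.coeff K u = 0) :
    tn (K + 1) z (D2 b + D1 b * u) ≤ (1 - q) / (10 * C) := by
  have hβ0 : 0 ≤ b * z := by positivity
  have hβ : b * z ≤ (1 - q) / 4 := by nlinarith
  have hβ1 : b * z ≤ 1 := by linarith
  have h1 := tn_D2 (K + 1) z b hz hb hβ1
  have h2 := tn_D1 (K + 1) z b hz hb hβ1
  have h3 : tn (K + 1) z u ≤ 2 / 5 * q := by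
    unfold tn at hu ⊢
    rw [sum_range_succ, huK]; simpa using hu
  have h4 := tn_mul (K + 1) z hz (D1 b) u
  have h5 : tn (K + 1) z (D1 b) * tn (K + 1) z u ≤ (b * z + (b * z) ^ 2) * (2 / 5 * q) :=
    mul_le_mul h2 h3 (tn_nonneg _ _ hz _) (by positivity)
  have h6 := tn_add (K + 1) z hz (D2 b) (D1 b * u)
  have e : (1 - q) / (10 * C) = 2 / 5 * (b * z) := by
    rw [← hbz]; field_simp; ring
  rw [e]
  set β := b * z
  have h7 : β + (1 + β) * (2 / 5 * q) ≤ 2 / 5 := by nlinarith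
  have h8 : β * (β + (1 + β) * (2 / 5 * q)) ≤ β * (2 / 5) := mul_le_mul_of_nonneg_left h7 hβ0
  nlinarith

lemma tn_mono_K (K : ℕ) (z : ℝ) (hz : 0 ≤ z) (f : PowerSeries ℝ) : tn K z f ≤ tn (K + 1) z f := by
  unfold tn
  rw [sum_range_succ]
  have : 0 ≤ |PowerSeries.coeff K f| * z ^ K := by positivity
  linarith

lemma C_facts (S : Setup Q V c ρ π) (K : ℕ) (hK : 1 ≤ K) (C : ℝ)
    (hC : C = 2 ^ (1 / (K : ℝ)) * (2 * c * ∫ y, V y ∂π) ^ (1 - 1 / (K : ℝ))) :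
    1 ≤ C ∧ ∀ i < K, (∫ y, V y ∂π) ^ ((i : ℝ) / K) ≤ C := by
  have hp := S.piV_ge
  have hp1 : 1 ≤ ∫ y, V y ∂π := (Real.one_le_exp zero_le_one).trans hp
  have hc := S.hc
  have hK0 : (0 : ℝ) < K := by exact_mod_cast (by omega : 0 < K)
  have hK1 : (1 : ℝ) ≤ K := by exact_mod_cast hK
  set p := ∫ y, V y ∂π
  have e : C = 2 * (c * p) ^ (1 - 1 / (K : ℝ)) := by
    have := two_mul_rpow_half (2 * c * p) (1 - 1 / (K : ℝ)) (by positivity)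
    rw [sub_sub_cancel] at this
    rw [hC, this]; congr 2; ring
  have hcp : p ≤ c * p := by nlinarith
  have hu : 0 ≤ 1 - 1 / (K : ℝ) := by
    rw [sub_nonneg, div_le_one hK0]; exact hK1
  have h1 : 1 ≤ (c * p) ^ (1 - 1 / (K : ℝ)) := Real.one_le_rpow (by linarith) hu
  refine ⟨by rw [e]; linarith, fun i hi => ?_⟩
  have hi' : (i : ℝ) + 1 ≤ K := by exact_mod_cast hi
  have h2 : p ^ ((i : ℝ) / K) ≤ p ^ (1 - 1 / (K : ℝ)) := by
    refine Real.rpow_le_rpow_of_exponent_le hp1 ?_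
    rw [le_sub_iff_add_le, ← add_div, div_le_one hK0]; exact hi'
  have h3 : p ^ (1 - 1 / (K : ℝ)) ≤ (c * p) ^ (1 - 1 / (K : ℝ)) :=
    Real.rpow_le_rpow (by linarith) hcp hu
  rw [e]; linarith

lemma q_facts (S : Setup Q V c ρ π) (K : ℕ) (hK : 1 ≤ K) :
    0 < ρ ^ (1 / (K : ℝ)) ∧ ρ ^ (1 / (K : ℝ)) < 1 := by
  have hK0 : (0 : ℝ) < K := by exact_mod_cast (by omega : 0 < K)
  exact ⟨Real.rpow_pos_of_pos S.hρ0 _, Real.rpow_lt_one S.hρ0.le S.hρ1 (by positivity)⟩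

/-- bounds for the normalising series and its inverse -/
lemma r_bounds (S : Setup Q V c ρ π) (hg : Slow V π g) (hg0 : ∫ x, g x ∂π = 0) (hb : 0 ≤ b)
    (hK : 1 ≤ K) (hgb : ∀ᵐ x ∂π, |g x| ≤ b * V x ^ (1 / (K : ℝ))) (q C z : ℝ)
    (hq : q = ρ ^ (1 / (K : ℝ)))
    (hC : C = 2 ^ (1 / (K : ℝ)) * (2 * c * ∫ y, V y ∂π) ^ (1 - 1 / (K : ℝ)))
    (hz : 0 ≤ z) (hbz : 4 * C * (b * z) = 1 - q)
    {P : X → PowerSeries ℝ} {u : PowerSeries ℝ} (hP : PInv Q V π q K P u)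
    (hu : tn K z u ≤ 2 / 5 * q) (r : PowerSeries ℝ) (hr : r = intS π (tS g P)) :
    tn K z r⁻¹ * (1 - (1 - q) / 10) ≤ 1 ∧
      ∑ i ∈ range K, |PowerSeries.coeff (i + 1) r| * z ^ (i + 1) ≤
        (∫ y, V y ∂π) * ((1 - q) / (10 * C)) := by
  obtain ⟨hq0, hq1⟩ := q_facts S K hK
  rw [← hq] at hq0 hq1
  obtain ⟨hC1, hCi⟩ := C_facts S K hK C hC
  have hp := S.piV_ge
  have hp1 : 1 ≤ ∫ y, V y ∂π := (Real.one_le_exp zero_le_one).trans hp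
  have hK0 : (0 : ℝ) < K := by exact_mod_cast (by omega : 0 < K)
  have ha := a_bound K q C b z u hq0.le hq1 hC1 hb hz hbz hu (hP.tr K le_rfl)
  have hr0 : PowerSeries.coeff 0 r = 1 := by
    rw [hr, coeff_intS]; simp [coeff_zero_tS P hP.zero]
  have hrc : ∀ i, 1 ≤ i → i ≤ K → |PowerSeries.coeff i r| ≤
      PowerSeries.coeff i (D2 b + D1 b * u) * (∫ x, V x ∂π) ^ ((i : ℝ) / K) := fun i h1 h2 => by
    rw [hr]; exact r_coeff S hg hg0 hb hgb hP i h1 h2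
  constructor
  · refine tn_inv K z hz r (by rw [← PowerSeries.coeff_zero_eq_constantCoeff_apply, hr0]) _ (by linarith) ?_
    have : tn K z (r - 1) ≤ C * tn K z (D2 b + D1 b * u) := by
      unfold tn
      rw [mul_sum]
      refine sum_le_sum fun i hi => ?_
      rw [mem_range] at hi
      rw [← mul_assoc]
      refine mul_le_mul_of_nonneg_right ?_ (by positivity)
      rw [map_sub, PowerSeries.coeff_one]
      rcases Nat.eq_zero_or_pos i with rfl | hi1
      · rw [hr0]; simp; positivity
      · rw [if_neg (by omega), sub_zero]
        refine (hrc i hi1 hi.le).trans ?_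
        rw [mul_comm C]
        exact mul_le_mul (le_abs_self _) (hCi i hi) (by positivity) (abs_nonneg _)
    calc tn K z (r - 1) ≤ C * tn K z (D2 b + D1 b * u) := this
      _ ≤ C * ((1 - q) / (10 * C)) := mul_le_mul_of_nonneg_left ((tn_mono_K K z hz _).trans ha) (by linarith)
      _ = (1 - q) / 10 := by field_simp
  · calc ∑ i ∈ range K, |PowerSeries.coeff (i + 1) r| * z ^ (i + 1)
        ≤ ∑ i ∈ range K, (∫ y, V y ∂π) * (|PowerSeries.coeff (i + 1) (D2 b + D1 b * u)| * z ^ (i + 1)) := by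
          refine sum_le_sum fun i hi => ?_
          rw [mem_range] at hi
          rw [← mul_assoc]
          refine mul_le_mul_of_nonneg_right ?_ (by positivity)
          refine (hrc (i + 1) (by omega) (by omega)).trans ?_
          rw [mul_comm (∫ y, V y ∂π)]
          refine mul_le_mul (le_abs_self _) ?_ (by positivity) (abs_nonneg _)
          calc (∫ y, V y ∂π) ^ (((i + 1 : ℕ) : ℝ) / K) ≤ (∫ y, V y ∂π) ^ (1 : ℝ) := by
                refine Real.rpow_le_rpow_of_exponent_le hp1 ?_
                rw [div_le_one hK0]; exact_mod_cast hi
            _ = _ := Real.rpow_one _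
      _ ≤ (∫ y, V y ∂π) * tn (K + 1) z (D2 b + D1 b * u) := by
          rw [← mul_sum]
          refine mul_le_mul_of_nonneg_left ?_ (by linarith)
          unfold tn
          rw [sum_range_succ' _ K]
          have : 0 ≤ |PowerSeries.coeff 0 (D2 b + D1 b * u)| * z ^ 0 := by positivity
          linarith
      _ ≤ _ := mul_le_mul_of_nonneg_left ha (by linarith)

lemma num_step (q C β t w : ℝ) (hq0 : 0 ≤ q) (hq1 : q < 1) (hC : 1 ≤ C) (hβ0 : 0 ≤ β)
    (hβ : 4 * C * β = 1 - q) (ht0 : 0 ≤ t) (ht : t * (1 - (1 - q) / 10) ≤ 1)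
    (hw : w ≤ q * (2 / 5 * q) + q * C * ((β + β ^ 2) * (1 + 2 / 5 * q))) : t * w ≤ 2 / 5 * q := by
  have h1 : β ≤ (1 - q) / 4 := by nlinarith
  have h2 : C * (β + β ^ 2) ≤ (1 - q) / 4 * (1 + (1 - q) / 4) := by
    have : C * (β + β ^ 2) = (1 - q) / 4 * (1 + β) := by rw [← hβ]; ring
    rw [this]
    exact mul_le_mul_of_nonneg_left (by linarith) (by linarith)
  have h3 : (2 / 5 * q) + (1 - q) / 4 * (1 + (1 - q) / 4) * (1 + 2 / 5 * q) ≤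
      2 / 5 * (1 - (1 - q) / 10) := by
    have : (1 + (1 - q) / 4) * (1 + 2 / 5 * q) ≤ 36 / 25 := by nlinarith
    nlinarith
  have h4 : w ≤ q * (2 / 5 * (1 - (1 - q) / 10)) := by
    refine hw.trans ?_
    have h5 : C * (β + β ^ 2) * (1 + 2 / 5 * q) ≤ (1 - q) / 4 * (1 + (1 - q) / 4) * (1 + 2 / 5 * q) :=
      mul_le_mul_of_nonneg_right h2 (by linarith)
    have h6 := mul_le_mul_of_nonneg_left (add_le_add_right h5 (2 / 5 * q)) hq0
    have h7 := mul_le_mul_of_nonneg_left h3 hq0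
    nlinarith
  calc t * w ≤ t * (q * (2 / 5 * (1 - (1 - q) / 10))) := mul_le_mul_of_nonneg_left h4 ht0
    _ = 2 / 5 * q * (t * (1 - (1 - q) / 10)) := by ring
    _ ≤ 2 / 5 * q * 1 := mul_le_mul_of_nonneg_left ht (by positivity)
    _ = _ := by ring

lemma step_inv (S : Setup Q V c ρ π) (hg : Slow V π g) (hg0 : ∫ x, g x ∂π = 0) (hb : 0 ≤ b)
    (hK : 1 ≤ K) (hgb : ∀ᵐ x ∂π, |g x| ≤ b * V x ^ (1 / (K : ℝ))) (q C z : ℝ)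
    (hq : q = ρ ^ (1 / (K : ℝ)))
    (hC : C = 2 ^ (1 / (K : ℝ)) * (2 * c * ∫ y, V y ∂π) ^ (1 - 1 / (K : ℝ)))
    (hz : 0 ≤ z) (hbz : 4 * C * (b * z) = 1 - q) (m : ℕ) :
    ∃ u, PInv Q V π q K (pS Q π g m) u ∧ tn K z u ≤ 2 / 5 * q := by
  obtain ⟨hq0, hq1⟩ := q_facts S K hK
  rw [← hq] at hq0 hq1
  obtain ⟨hC1, hCi⟩ := C_facts S K hK C hC
  induction m with
  | zero =>
    refine ⟨0, ⟨fun i _ => ?_, fun i _ => by simp, fun i => by simp [pS], fun x => by simp [pS],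
      slow_pS S hg 0⟩, ?_⟩
    · simp only [pS, map_zero]; exact Nb.zero S hq0.le le_rfl
    · simp only [tn, map_zero, abs_zero, zero_mul, sum_const_zero]; positivity
  | succ m ih =>
    obtain ⟨u, hP, hu⟩ := ih
    obtain ⟨hv, -⟩ := r_bounds S hg hg0 hb hK hgb q C z hq hC hz hbz hP hu (rS Q π g m) rfl
    set v := (rS Q π g m)⁻¹ with hvdef
    let av : PowerSeries ℝ := PowerSeries.mk fun i => |PowerSeries.coeff i v|
    let w : PowerSeries ℝ := PowerSeries.C q * u + PowerSeries.C (q * C) * (D1 b * (1 + u))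
    have hpS : ∀ x, pS Q π g (m + 1) x = v * (intS (Q x) (tS g (pS Q π g m)) - intS π (tS g (pS Q π g m))) :=
      fun x => rfl
    have hsl := SlowP.sub S (SlowP.QS S (slow_tS S hg hP.slow)) (SlowP.const S (intS π (tS g (pS Q π g m))))
    refine ⟨PowerSeries.mk fun i => if i < K then PowerSeries.coeff i (av * w) else 0,
      ⟨fun i hi => ?_, fun i hi => ?_, fun i => ?_, coeff_zero_pS (m + 1), slow_pS S hg (m + 1)⟩, ?_⟩
    · rw [PowerSeries.coeff_mk, if_pos hi]
      simp only [hpS, PowerSeries.coeff_mul]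
      refine Nb.sum S hq0.le _ _ _ fun p hp => ?_
      rw [HasAntidiagonal.mem_antidiagonal] at hp
      have hp2 : p.2 < K := by omega
      rw [hq] at hP
      have h := intS_sub_nb S hg hb hgb hP p.2 hp2
      rw [← hq, ← hC] at h
      have e : PowerSeries.coeff p.2 w = q * PowerSeries.coeff p.2 u + q * C * PowerSeries.coeff p.2 (D1 b * (1 + u)) := by
        simp only [w, map_add, PowerSeries.coeff_C_mul]
      have e2 : PowerSeries.coeff p.1 av = |PowerSeries.coeff p.1 v| := PowerSeries.coeff_mk _ _
      rw [e, e2]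
      refine (h.const_mul S _).mono S hq0.le ?_
      have : (p.2 : ℝ) ≤ i := by exact_mod_cast (by omega : p.2 ≤ i)
      gcongr
    · rw [PowerSeries.coeff_mk, if_neg (by omega)]
    · simp only [hpS, PowerSeries.coeff_mul]
      rw [integral_finsetSum _ fun p _ => ((hsl p.2).integrable S).const_mul _]
      refine sum_eq_zero fun p _ => ?_
      rw [integral_const_mul]
      have : ∫ x, PowerSeries.coeff p.2 (intS (Q x) (tS g (pS Q π g m)) - intS π (tS g (pS Q π g m))) ∂π = 0 := by
        simp only [map_sub, coeff_intS]
        rw [integral_sub (((slow_tS S hg hP.slow p.2).Qf S).integrable S) (integrable_const _),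
          (slow_tS S hg hP.slow p.2).int_Q S]
        simp
      rw [this, mul_zero]
    · have e1 : tn K z (PowerSeries.mk fun i => if i < K then PowerSeries.coeff i (av * w) else 0) = tn K z (av * w) := by
        unfold tn
        refine sum_congr rfl fun i hi => ?_
        rw [mem_range] at hi
        rw [PowerSeries.coeff_mk, if_pos hi]
      have e2 : tn K z av = tn K z v := by simp [tn, av]
      rw [e1]
      refine (tn_mul K z hz av w).trans ?_
      rw [e2]
      have hcm : ∀ (a : ℝ) (f : PowerSeries ℝ), 0 ≤ a → tn K z (PowerSeries.C a * f) = a * tn K z f := by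
        intro a f ha
        unfold tn
        rw [mul_sum]
        refine sum_congr rfl fun i _ => ?_
        rw [PowerSeries.coeff_C_mul, abs_mul, abs_of_nonneg ha, mul_assoc]
      have hβ0 : 0 ≤ b * z := by positivity
      have hβ1 : b * z ≤ 1 := by nlinarith
      refine num_step q C (b * z) _ _ hq0.le hq1 hC1 hβ0 hbz (tn_nonneg K z hz v) hv ?_
      refine (tn_add K z hz _ _).trans ?_
      rw [hcm q _ hq0.le, hcm (q * C) _ (by positivity)]
      refine add_le_add (mul_le_mul_of_nonneg_left hu hq0.le) (mul_le_mul_of_nonneg_left ?_ (by positivity))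
      refine (tn_mul K z hz _ _).trans ?_
      refine mul_le_mul (tn_D1 K z b hz hb hβ1) ?_ (tn_nonneg K z hz _) (by positivity)
      refine (tn_add K z hz _ _).trans (add_le_add (tn_one K z) hu)

/-- the main cumulant estimate -/
lemma cumulant_bound (S : Setup Q V c ρ π) (hg : Slow V π g) (hg0 : ∫ x, g x ∂π = 0) (hb : 0 < b)
    (k : ℕ) (hgb : ∀ᵐ x ∂π, |g x| ≤ b * V x ^ (1 / ((k : ℝ) + 3))) (θ C : ℝ)
    (hθ : θ = 1 / (1 - ρ ^ (1 / ((k : ℝ) + 3))))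
    (hC : C = 2 ^ (1 / ((k : ℝ) + 3)) * (2 * c * ∫ y, V y ∂π) ^ (1 - 1 / ((k : ℝ) + 3))) (m : ℕ) :
    |PowerSeries.coeff (k + 2) (PowerSeries.derivative ℝ (rS Q π g m) * (rS Q π g m)⁻¹)| ≤
      ((k : ℝ) + 3) * ((2 * c * ∫ y, V y ∂π) / 2) * (4 * θ * C * b) ^ (k + 3) / (9 * θ * C) := by
  have hK : 1 ≤ k + 3 := by omega
  have hcast : (k : ℝ) + 3 = ((k + 3 : ℕ) : ℝ) := by push_cast; rfl
  rw [hcast] at hgb hθ hC ⊢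
  obtain ⟨hq0, hq1⟩ := q_facts S (k + 3) hK
  obtain ⟨hC1, hCi⟩ := C_facts S (k + 3) hK C hC
  have hp := S.piV_ge
  have hp1 : 1 ≤ ∫ y, V y ∂π := (Real.one_le_exp zero_le_one).trans hp
  have hc := S.hc
  set q := ρ ^ (1 / ((k + 3 : ℕ) : ℝ)) with hq
  have hθ0 : 0 < θ := by rw [hθ]; exact one_div_pos.2 (by linarith)
  have hθq : 1 - q = 1 / θ := by rw [hθ]; simp
  set z := 1 / (4 * θ * C * b) with hz
  have hz0 : 0 < z := by positivity
  have hbz : 4 * C * (b * z) = 1 - q := by rw [hθq, hz]; field_simp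
  obtain ⟨u, hP, hu⟩ := step_inv S hg hg0 hb.le hK hgb q C z hq hC hz0.le hbz m
  obtain ⟨hv, hr⟩ := r_bounds S hg hg0 hb.le hK hgb q C z hq hC hz0.le hbz hP hu (rS Q π g m) rfl
  set r := rS Q π g m
  have hv' : tn (k + 3) z r⁻¹ ≤ 10 / 9 := by
    have := tn_nonneg (k + 3) z hz0.le r⁻¹
    nlinarith
  have key : |PowerSeries.coeff (k + 2) (PowerSeries.derivative ℝ r * r⁻¹)| * z ^ (k + 3) ≤
      ((k + 3 : ℕ) : ℝ) * ((∫ y, V y ∂π) * ((1 - q) / (10 * C)) * (10 / 9)) := by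
    have h1 : |PowerSeries.coeff (k + 2) (PowerSeries.derivative ℝ r * r⁻¹)| * z ^ (k + 3) ≤
        ∑ p ∈ HasAntidiagonal.antidiagonal (k + 2), ((k + 3 : ℕ) : ℝ) *
          ((|PowerSeries.coeff (p.1 + 1) r| * z ^ (p.1 + 1)) * (|PowerSeries.coeff p.2 r⁻¹| * z ^ p.2)) := by
      rw [PowerSeries.coeff_mul]
      refine (mul_le_mul_of_nonneg_right (abs_sum_le_sum_abs _ _) (by positivity)).trans ?_
      rw [sum_mul]
      refine sum_le_sum fun p hp => ?_
      rw [HasAntidiagonal.mem_antidiagonal] at hp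
      rw [PowerSeries.coeff_derivative, abs_mul, abs_mul,
        show k + 3 = (p.1 + 1) + p.2 by omega, pow_add]
      have h2 : |(p.1 : ℝ) + 1| ≤ ((p.1 + 1 + p.2 : ℕ) : ℝ) := by
        rw [abs_of_nonneg (by positivity)]; push_cast
        have : (0 : ℝ) ≤ p.2 := by positivity
        linarith
      have h3 : 0 ≤ (|PowerSeries.coeff (p.1 + 1) r| * z ^ (p.1 + 1)) * (|PowerSeries.coeff p.2 r⁻¹| * z ^ p.2) := by
        positivity
      have := mul_le_mul_of_nonneg_right h2 h3
      refine le_trans (le_of_eq ?_) this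
      ring
    refine h1.trans ?_
    rw [← mul_sum]
    refine mul_le_mul_of_nonneg_left ?_ (by positivity)
    have h4 := sum_antidiag_le (k + 3) (fun i => |PowerSeries.coeff (i + 1) r| * z ^ (i + 1))
      (fun i => |PowerSeries.coeff i r⁻¹| * z ^ i) (fun i => by positivity) (fun i => by positivity)
    have h5 : ∑ p ∈ HasAntidiagonal.antidiagonal (k + 2),
          ((|PowerSeries.coeff (p.1 + 1) r| * z ^ (p.1 + 1)) * (|PowerSeries.coeff p.2 r⁻¹| * z ^ p.2)) ≤
        ∑ i ∈ range (k + 3), ∑ p ∈ HasAntidiagonal.antidiagonal i,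
          ((|PowerSeries.coeff (p.1 + 1) r| * z ^ (p.1 + 1)) * (|PowerSeries.coeff p.2 r⁻¹| * z ^ p.2)) :=
      single_le_sum (f := fun i => ∑ p ∈ HasAntidiagonal.antidiagonal i,
          ((|PowerSeries.coeff (p.1 + 1) r| * z ^ (p.1 + 1)) * (|PowerSeries.coeff p.2 r⁻¹| * z ^ p.2)))
        (fun i _ => sum_nonneg fun p _ => by positivity) (mem_range.2 (by omega))
    refine h5.trans (h4.trans ?_)
    refine mul_le_mul hr hv' (tn_nonneg _ _ hz0.le _) ?_
    have : 0 ≤ 1 - q := by linarith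
    positivity
  have hzz : z ^ (k + 3) * (4 * θ * C * b) ^ (k + 3) = 1 := by
    rw [← mul_pow, hz, one_div_mul_cancel (by positivity), one_pow]
  have hY : 0 ≤ (4 * θ * C * b) ^ (k + 3) := by positivity
  calc |PowerSeries.coeff (k + 2) (PowerSeries.derivative ℝ r * r⁻¹)|
      = |PowerSeries.coeff (k + 2) (PowerSeries.derivative ℝ r * r⁻¹)| * z ^ (k + 3) * (4 * θ * C * b) ^ (k + 3) := by
        rw [mul_assoc, hzz, mul_one]
    _ ≤ ((k + 3 : ℕ) : ℝ) * ((∫ y, V y ∂π) * ((1 - q) / (10 * C)) * (10 / 9)) * (4 * θ * C * b) ^ (k + 3) :=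
        mul_le_mul_of_nonneg_right key hY
    _ = ((k + 3 : ℕ) : ℝ) * (∫ y, V y ∂π) * ((4 * θ * C * b) ^ (k + 3) / (9 * θ * C)) := by
        rw [hθq]; field_simp
    _ ≤ ((k + 3 : ℕ) : ℝ) * ((2 * c * ∫ y, V y ∂π) / 2) * ((4 * θ * C * b) ^ (k + 3) / (9 * θ * C)) := by
        refine mul_le_mul_of_nonneg_right (mul_le_mul_of_nonneg_left ?_ (by positivity)) (by positivity)
        nlinarith
    _ = _ := by ring
end

/-- measurable with all absolute moments finite -/
def AllI {Ω : Type*} [MeasurableSpace Ω] (P : Measure Ω) (F : Ω → ℝ) : Prop :=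
  Measurable F ∧ ∀ k : ℕ, Integrable (fun ω => |F ω| ^ k) P

section
variable {Ω : Type*} [MeasurableSpace Ω] {P : Measure Ω} [IsProbabilityMeasure P] {F G : Ω → ℝ}

lemma AllI.int (hF : AllI P F) : Integrable F P := by
  have := hF.2 1
  simp only [pow_one] at this
  exact this.mono' hF.1.aestronglyMeasurable (ae_of_all _ fun ω => le_rfl)

lemma AllI.const (a : ℝ) : AllI P (fun _ => a) :=
  ⟨measurable_const, fun _ => integrable_const _⟩

lemma AllI.mul (hF : AllI P F) (hG : AllI P G) : AllI P (fun ω => F ω * G ω) := by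
  refine ⟨hF.1.mul hG.1, fun k => ?_⟩
  refine ((hF.2 (k * 2)).add (hG.2 (k * 2))).mono' ((hF.1.mul hG.1).abs.pow_const k).aestronglyMeasurable
    (ae_of_all _ fun ω => ?_)
  rw [Real.norm_eq_abs, abs_of_nonneg (by positivity), abs_mul, mul_pow]
  simp only [Pi.add_apply, pow_mul]
  nlinarith [sq_nonneg (|F ω| ^ k - |G ω| ^ k), sq_nonneg (|F ω| ^ k), sq_nonneg (|G ω| ^ k)]

lemma AllI.add (hF : AllI P F) (hG : AllI P G) : AllI P (fun ω => F ω + G ω) := by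
  refine ⟨hF.1.add hG.1, fun k => ?_⟩
  refine (((hF.2 k).add (hG.2 k)).const_mul (2 ^ (k - 1))).mono'
    ((hF.1.add hG.1).abs.pow_const k).aestronglyMeasurable (ae_of_all _ fun ω => ?_)
  rw [Real.norm_eq_abs, abs_of_nonneg (by positivity)]
  calc |F ω + G ω| ^ k ≤ (|F ω| + |G ω|) ^ k := pow_le_pow_left₀ (abs_nonneg _) (abs_add_le _ _) k
    _ ≤ _ := add_pow_le (abs_nonneg _) (abs_nonneg _) k

lemma AllI.sum {ι : Type*} (s : Finset ι) (f : ι → Ω → ℝ) (h : ∀ i ∈ s, AllI P (f i)) :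
    AllI P (fun ω => ∑ i ∈ s, f i ω) := by
  induction s using Finset.induction_on with
  | empty => simpa using AllI.const 0
  | insert a s ha ih =>
    simp only [sum_insert ha]
    exact (h a (mem_insert_self _ _)).add (ih fun i hi => h i (mem_insert_of_mem hi))

lemma AllI.pow (hF : AllI P F) (n : ℕ) : AllI P (fun ω => F ω ^ n) := by
  induction n with
  | zero => simpa using AllI.const 1
  | succ n ih => simp only [pow_succ]; exact ih.mul hF

end

section
variable {X : Type*} [MeasurableSpace X] {Q : Kernel X X} [IsMarkovKernel Q] {V : X → ℝ} {c ρ : ℝ}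
    {π : Measure X} [IsProbabilityMeasure π] {g : X → ℝ}
    {Ω : Type*} [mΩ : MeasurableSpace Ω] {P : Measure Ω} [IsProbabilityMeasure P] {Xs : ℕ → Ω → X}

/-- the past -/
def past (Xs : ℕ → Ω → X) (n : ℕ) : MeasurableSpace Ω :=
  ⨆ i ∈ Finset.range (n + 1), MeasurableSpace.comap (Xs i) inferInstance

lemma past_le (hX : ∀ n, Measurable (Xs n)) (n : ℕ) : past Xs n ≤ mΩ :=
  iSup₂_le fun i _ => (hX i).comap_le

lemma past_meas {f : X → ℝ} (hf : Measurable f) (n i : ℕ) (hi : i ≤ n) :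
    Measurable[past Xs n] (fun ω => f (Xs i ω)) := by
  have h1 : MeasurableSpace.comap (Xs i) inferInstance ≤ past Xs n :=
    le_iSup₂_of_le (f := fun i (_ : i ∈ Finset.range (n + 1)) => MeasurableSpace.comap (Xs i) inferInstance)
      i (mem_range.2 (by omega)) le_rfl
  exact (hf.comp (comap_measurable (Xs i))).mono h1 le_rfl

lemma markov_bdd (hch : IsMarkovChain P Xs π Q) (n : ℕ) (f : X → ℝ) (hf : Measurable f) (N : ℝ)
    (hN : 0 < N) (hfN : ∀ x, |f x| ≤ N) (H : Ω → ℝ) (hH : Integrable H P)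
    (hHm : Measurable[past Xs n] H) :
    ∫ ω, H ω * f (Xs (n + 1) ω) ∂P = ∫ ω, H ω * ∫ y, f y ∂(Q (Xs n ω)) ∂P := by
  have hm := hch.markov n (fun x => f x / N) (hf.div_const N) (fun x => by
    rw [abs_div, abs_of_pos hN, div_le_one hN]; exact hfN x)
  change (P[fun ω => f (Xs (n + 1) ω) / N | past Xs n]) =ᵐ[P] _ at hm
  have hle := past_le hch.meas n
  have i1 : Integrable (fun ω => f (Xs (n + 1) ω) / N) P := by
    refine (integrable_const (1 : ℝ)).mono' ((hf.div_const N).comp (hch.meas (n + 1))).aestronglyMeasurable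
      (ae_of_all _ fun ω => ?_)
    rw [Real.norm_eq_abs, abs_div, abs_of_pos hN, div_le_one hN]; exact hfN _
  have i2 : Integrable (H * fun ω => f (Xs (n + 1) ω) / N) P := by
    refine hH.norm.mono' (hH.1.mul i1.1) (ae_of_all _ fun ω => ?_)
    rw [Pi.mul_apply, norm_mul]
    refine mul_le_of_le_one_right (norm_nonneg _) ?_
    rw [Real.norm_eq_abs, abs_div, abs_of_pos hN, div_le_one hN]; exact hfN _
  have hpull := condExp_mul_of_stronglyMeasurable_left (m := past Xs n) (μ := P)
    hHm.stronglyMeasurable i2 i1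
  have e1 : ∫ ω, (H * fun ω => f (Xs (n + 1) ω) / N) ω ∂P =
      ∫ ω, H ω * ∫ y, f y / N ∂(Q (Xs n ω)) ∂P := by
    rw [← integral_condExp hle]
    refine integral_congr_ae ?_
    filter_upwards [hpull, hm] with ω h1 h2
    rw [h1, Pi.mul_apply, h2]
  have e2 : ∫ ω, (H * fun ω => f (Xs (n + 1) ω) / N) ω ∂P = (∫ ω, H ω * f (Xs (n + 1) ω) ∂P) / N := by
    rw [← integral_div]
    refine integral_congr_ae (ae_of_all _ fun ω => ?_)
    simp only [Pi.mul_apply]; ring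
  have e3 : ∫ ω, H ω * ∫ y, f y / N ∂(Q (Xs n ω)) ∂P = (∫ ω, H ω * ∫ y, f y ∂(Q (Xs n ω)) ∂P) / N := by
    rw [← integral_div]
    refine integral_congr_ae (ae_of_all _ fun ω => ?_)
    simp only [integral_div]; ring
  rw [e2, e3] at e1
  field_simp at e1
  exact e1

lemma law_X (S : Setup Q V c ρ π) (hch : IsMarkovChain P Xs π Q) (n : ℕ) : P.map (Xs n) = π := by
  induction n with
  | zero => exact hch.init
  | succ n ih =>
    have : IsProbabilityMeasure (P.map (Xs (n + 1))) := Measure.isProbabilityMeasure_map (hch.meas _).aemeasurable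
    refine Measure.ext fun A hA => ?_
    have hs : Slow V π (A.indicator fun _ => (1 : ℝ)) := by
      refine ⟨measurable_const.indicator hA, fun K _ => ⟨1, zero_le_one, ae_of_all _ fun x => ?_⟩⟩
      have : 1 ≤ V x ^ (1 / (K : ℝ)) := Real.one_le_rpow (S.V1 x) (by positivity)
      rw [one_mul]
      refine le_trans ?_ this
      by_cases h : x ∈ A <;> simp [h]
    have h := markov_bdd hch n (A.indicator fun _ => (1 : ℝ)) (measurable_const.indicator hA) 1 one_pos
      (fun x => by by_cases h : x ∈ A <;> simp [h]) (fun _ => 1) (integrable_const _) measurable_const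
    simp only [one_mul] at h
    have h2 : ∫ ω, (∫ y, A.indicator (fun _ => (1 : ℝ)) y ∂(Q (Xs n ω))) ∂P =
        ∫ x, (∫ y, A.indicator (fun _ => (1 : ℝ)) y ∂(Q x)) ∂π := by
      rw [← ih, integral_map (hch.meas n).aemeasurable (meas_Q hs.1).aestronglyMeasurable]
    have h3 : ∫ ω, A.indicator (fun _ => (1 : ℝ)) (Xs (n + 1) ω) ∂P =
        ∫ x, A.indicator (fun _ => (1 : ℝ)) x ∂(P.map (Xs (n + 1))) := by
      rw [integral_map (hch.meas (n + 1)).aemeasurable hs.1.aestronglyMeasurable]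
    rw [h3, h2, hs.int_Q S, integral_indicator_const _ hA, integral_indicator_const _ hA] at h
    simp only [smul_eq_mul, mul_one] at h
    exact (measureReal_eq_measureReal_iff (measure_ne_top _ _) (measure_ne_top _ _)).1 h

lemma Slow.allI (S : Setup Q V c ρ π) (hch : IsMarkovChain P Xs π Q) {f : X → ℝ} (hf : Slow V π f) (n : ℕ) :
    AllI P (fun ω => f (Xs n ω)) := by
  refine ⟨hf.1.comp (hch.meas n), fun k => ?_⟩
  have h := (hf.abs.pow S k).integrable S
  rw [← law_X S hch n] at h
  exact h.comp_measurable (hch.meas n)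

lemma ae_X (S : Setup Q V c ρ π) (hch : IsMarkovChain P Xs π Q) (n : ℕ) {p : X → Prop}
    (h : ∀ᵐ x ∂π, p x) : ∀ᵐ ω ∂P, p (Xs n ω) := by
  rw [← law_X S hch n] at h
  exact ae_of_ae_map (hch.meas n).aemeasurable h

lemma markov_slow (S : Setup Q V c ρ π) (hch : IsMarkovChain P Xs π Q) (n : ℕ) {f : X → ℝ}
    (hf : Slow V π f) {H : Ω → ℝ} (hH : AllI P H) (hHm : Measurable[past Xs n] H) :
    ∫ ω, H ω * f (Xs (n + 1) ω) ∂P = ∫ ω, H ω * ∫ y, f y ∂(Q (Xs n ω)) ∂P := by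
  let fN : ℕ → X → ℝ := fun N x => max (-((N : ℝ) + 1)) (min (f x) ((N : ℝ) + 1))
  have hfm : ∀ N, Measurable (fN N) := fun N => measurable_const.max (hf.1.min measurable_const)
  have hfb : ∀ N x, |fN N x| ≤ (N : ℝ) + 1 := fun N x => by
    have : (0 : ℝ) ≤ (N : ℝ) + 1 := by positivity
    rw [abs_le]
    exact ⟨le_max_left _ _, max_le (by linarith) (min_le_right _ _)⟩
  have hfa : ∀ N x, |fN N x| ≤ |f x| := fun N x => by
    have : (0 : ℝ) ≤ (N : ℝ) + 1 := by positivity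
    rw [abs_le]
    constructor
    · refine le_max_of_le_right (le_min (neg_abs_le _) ?_)
      have := abs_nonneg (f x); linarith
    · refine max_le ?_ ((min_le_left _ _).trans (le_abs_self _))
      have := abs_nonneg (f x); linarith
  have hlim : ∀ x, Filter.Tendsto (fun N => fN N x) Filter.atTop (nhds (f x)) := fun x => by
    refine tendsto_const_nhds.congr' ?_
    obtain ⟨M, hM⟩ := exists_nat_ge |f x|
    filter_upwards [Filter.eventually_ge_atTop M] with N hN
    have hN' : (M : ℝ) ≤ N := by exact_mod_cast hN
    have h1 := abs_le.1 hM
    simp only [fN]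
    rw [min_eq_left (by linarith), max_eq_right (by linarith)]
  have heq : ∀ N, ∫ ω, H ω * fN N (Xs (n + 1) ω) ∂P = ∫ ω, H ω * ∫ y, fN N y ∂(Q (Xs n ω)) ∂P := fun N =>
    markov_bdd hch n (fN N) (hfm N) ((N : ℝ) + 1) (by positivity) (hfb N) H hH.int hHm
  have L1 : Filter.Tendsto (fun N => ∫ ω, H ω * fN N (Xs (n + 1) ω) ∂P) Filter.atTop
      (nhds (∫ ω, H ω * f (Xs (n + 1) ω) ∂P)) := by
    refine tendsto_integral_of_dominated_convergence (fun ω => |H ω * f (Xs (n + 1) ω)|)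
      (fun N => (hH.1.mul ((hfm N).comp (hch.meas _))).aestronglyMeasurable)
      (hH.mul (hf.allI S hch (n + 1))).int.abs (fun N => ae_of_all _ fun ω => ?_)
      (ae_of_all _ fun ω => (hlim _).const_mul _)
    rw [Real.norm_eq_abs, abs_mul, abs_mul]
    exact mul_le_mul_of_nonneg_left (hfa _ _) (abs_nonneg _)
  have L2 : Filter.Tendsto (fun N => ∫ ω, H ω * ∫ y, fN N y ∂(Q (Xs n ω)) ∂P) Filter.atTop
      (nhds (∫ ω, H ω * ∫ y, f y ∂(Q (Xs n ω)) ∂P)) := by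
    have hae := ae_X S hch n (hf.ae_int_Q S)
    refine tendsto_integral_of_dominated_convergence (fun ω => |H ω * ∫ y, |f y| ∂(Q (Xs n ω))|)
      (fun N => (hH.1.mul ((meas_Q (hfm N)).comp (hch.meas _))).aestronglyMeasurable)
      (hH.mul ((hf.abs.Qf S).allI S hch n)).int.abs (fun N => ?_) ?_
    · filter_upwards [hae] with ω hω
      rw [Real.norm_eq_abs, abs_mul, abs_mul]
      refine mul_le_mul_of_nonneg_left ?_ (abs_nonneg _)
      refine le_trans ?_ (le_abs_self _)
      refine abs_integral_le_integral_abs.trans ?_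
      refine integral_mono ?_ hω.abs (fun y => hfa N y)
      exact (hω.abs.mono' (hfm N).aestronglyMeasurable (ae_of_all _ fun y => hfa N y)).abs
    · filter_upwards [hae] with ω hω
      refine Filter.Tendsto.const_mul _ ?_
      exact tendsto_integral_of_dominated_convergence (fun y => |f y|)
        (fun N => (hfm N).aestronglyMeasurable) hω.abs (fun N => ae_of_all _ fun y => hfa N y)
        (ae_of_all _ fun y => hlim y)
  simp only [heq] at L1
  exact tendsto_nhds_unique L1 L2

lemma intS_mul (r : PowerSeries ℝ) (Y : Ω → PowerSeries ℝ)
    (h : ∀ i, Integrable (fun ω => PowerSeries.coeff i (Y ω)) P) :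
    intS P (fun ω => r * Y ω) = r * intS P Y := by
  ext i
  rw [coeff_intS, PowerSeries.coeff_mul]
  simp only [PowerSeries.coeff_mul]
  rw [integral_finsetSum _ fun p _ => (h p.2).const_mul _]
  refine sum_congr rfl fun p _ => ?_
  rw [integral_const_mul, coeff_intS]

lemma allI_exp_mul {F : Ω → ℝ} (hF : AllI P F) {Y : Ω → PowerSeries ℝ}
    (hY : ∀ i, AllI P (fun ω => PowerSeries.coeff i (Y ω))) (p : ℕ) :
    AllI P (fun ω => PowerSeries.coeff p (PowerSeries.rescale (F ω) (PowerSeries.exp ℝ) * Y ω)) := by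
  simp only [PowerSeries.coeff_mul, coeff_D]
  refine AllI.sum _ _ fun i _ => ?_
  refine AllI.mul ?_ (hY _)
  have := (hF.pow i.1).mul (AllI.const (1 / (i.1.factorial : ℝ)))
  simpa [div_eq_mul_inv] using this

lemma exp_markov (S : Setup Q V c ρ π) (hch : IsMarkovChain P Xs π Q) (n : ℕ) {T : X → PowerSeries ℝ}
    (hT : SlowP V π T) {H : Ω → ℝ} (hH : AllI P H) (hHm : Measurable[past Xs n] H) :
    intS P (fun ω => PowerSeries.rescale (H ω) (PowerSeries.exp ℝ) * T (Xs (n + 1) ω)) =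
      intS P (fun ω => PowerSeries.rescale (H ω) (PowerSeries.exp ℝ) * intS (Q (Xs n ω)) T) := by
  ext p
  rw [coeff_intS, coeff_intS]
  simp only [PowerSeries.coeff_mul, coeff_D]
  have hHi : ∀ i : ℕ, AllI P (fun ω => H ω ^ i / (i.factorial : ℝ)) := fun i => by
    have := (hH.pow i).mul (AllI.const (1 / (i.factorial : ℝ)))
    simpa [div_eq_mul_inv] using this
  rw [integral_finsetSum _ fun i _ => ((hHi i.1).mul ((hT i.2).allI S hch (n + 1))).int,
    integral_finsetSum _ fun i _ => ((hHi i.1).mul (((SlowP.QS S hT) i.2).allI S hch n)).int]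
  refine sum_congr rfl fun i _ => ?_
  simp only [coeff_intS]
  exact markov_slow S hch n (hT i.2) (hHi i.1) ((hHm.pow_const i.1).div_const _)

lemma rescale_add_exp (a b : ℝ) : PowerSeries.rescale (a + b) (PowerSeries.exp ℝ) =
    PowerSeries.rescale a (PowerSeries.exp ℝ) * PowerSeries.rescale b (PowerSeries.exp ℝ) :=
  (PowerSeries.exp_mul_exp_eq_exp_add a b).symm

lemma B_identity (S : Setup Q V c ρ π) (hg : Slow V π g) (hch : IsMarkovChain P Xs π Q) (n m : ℕ) :
    intS P (fun ω => PowerSeries.rescale (∑ j ∈ range n, g (Xs j ω)) (PowerSeries.exp ℝ) *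
      tS g (pS Q π g m) (Xs n ω)) = ∏ j ∈ range (n + 1), rS Q π g (m + j) := by
  induction n generalizing m with
  | zero =>
    simp only [range_zero, sum_empty, zero_add, range_one, prod_singleton, add_zero]
    ext i
    rw [coeff_intS]
    simp only [PowerSeries.rescale_zero_apply, PowerSeries.constantCoeff_exp, map_one, one_mul]
    unfold rS
    rw [coeff_intS]
    have := integral_map (hch.meas 0).aemeasurable
      (slow_tS S hg (slow_pS S hg m) i).1.aestronglyMeasurable (μ := P)
    rw [hch.init] at this
    exact this.symm
  | succ n ih =>
    have hSn : ∀ k, AllI P (fun ω => ∑ j ∈ range k, g (Xs j ω)) := fun k =>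
      AllI.sum _ _ fun j _ => hg.allI S hch j
    rw [exp_markov S hch n (slow_tS S hg (slow_pS S hg m)) (hSn (n + 1))
      (Finset.measurable_fun_sum _ fun j hj => past_meas hg.1 n j (by rw [mem_range] at hj; omega))]
    have e : ∀ ω, PowerSeries.rescale (∑ j ∈ range (n + 1), g (Xs j ω)) (PowerSeries.exp ℝ) *
        intS (Q (Xs n ω)) (tS g (pS Q π g m)) = rS Q π g m *
          (PowerSeries.rescale (∑ j ∈ range n, g (Xs j ω)) (PowerSeries.exp ℝ) *
            tS g (pS Q π g (m + 1)) (Xs n ω)) := fun ω => by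
      rw [QT_eq, sum_range_succ, rescale_add_exp]
      unfold tS
      ring
    simp only [e]
    rw [intS_mul _ _ fun i => (allI_exp_mul (hSn n)
      (fun k => (slow_tS S hg (slow_pS S hg (m + 1)) k).allI S hch n) i).int, ih (m + 1),
      prod_range_succ' _ (n + 1), mul_comm]
    simp only [add_zero, add_assoc, add_comm 1]

lemma Z_identity (S : Setup Q V c ρ π) (hg : Slow V π g) (hch : IsMarkovChain P Xs π Q) (n : ℕ) :
    intS P (fun ω => PowerSeries.rescale (∑ j ∈ range n, g (Xs j ω)) (PowerSeries.exp ℝ)) =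
      ∏ j ∈ range n, rS Q π g j := by
  rcases n with _ | n
  · ext i
    rw [coeff_intS]
    simp
  · have := B_identity S hg hch n 0
    simp only [zero_add] at this
    rw [← this]
    congr 1
    funext ω
    rw [sum_range_succ, rescale_add_exp]
    simp [tS, pS]
end

lemma dlog_prod (n : ℕ) (r : ℕ → PowerSeries ℝ) (hr : ∀ j, PowerSeries.constantCoeff (r j) = 1) :
    PowerSeries.derivative ℝ (∏ j ∈ range n, r j) =
      (∑ j ∈ range n, PowerSeries.derivative ℝ (r j) * (r j)⁻¹) * ∏ j ∈ range n, r j := by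
  induction n with
  | zero => simp [PowerSeries.derivative_one]
  | succ n ih =>
    rw [prod_range_succ, sum_range_succ, Derivation.leibniz, ih]
    have hv : r n * (r n)⁻¹ = 1 := PowerSeries.mul_inv_cancel _ (by rw [hr]; exact one_ne_zero)
    simp only [smul_eq_mul]
    linear_combination (-(∏ j ∈ range n, r j) * PowerSeries.derivative ℝ (r n)) * hv

lemma log_pow_le (v γ : ℝ) (K : ℝ) (hv : Real.exp 1 ≤ v) (hγ : 0 ≤ γ) (hK : 0 < K) :
    Real.log v ^ γ ≤ (γ * K / Real.exp 1) ^ γ * v ^ (1 / K) := by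
  have he := Real.exp_pos 1
  have he1 : 1 ≤ Real.exp 1 := Real.one_le_exp zero_le_one
  have hv0 : 0 < v := by linarith
  have hL : 1 ≤ Real.log v := by rwa [Real.le_log_iff_exp_le hv0]
  rcases hγ.eq_or_lt with rfl | hγ
  · simp only [Real.rpow_zero, one_mul]
    exact Real.one_le_rpow (by linarith) (by positivity)
  · set y := v ^ (1 / (γ * K)) with hy
    have hy0 : 0 < y := Real.rpow_pos_of_pos hv0 _
    have h1 : Real.log v = γ * K * Real.log y := by
      rw [hy, Real.log_rpow hv0]; field_simp
    have h2 : Real.log y ≤ y / Real.exp 1 := by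
      have := Real.log_le_sub_one_of_pos (div_pos hy0 he)
      rw [Real.log_div hy0.ne' he.ne', Real.log_exp] at this
      linarith
    have h3 : Real.log v ≤ γ * K / Real.exp 1 * y := by
      rw [h1]
      have := mul_le_mul_of_nonneg_left h2 (by positivity : 0 ≤ γ * K)
      refine this.trans (le_of_eq ?_); ring
    calc Real.log v ^ γ ≤ (γ * K / Real.exp 1 * y) ^ γ := Real.rpow_le_rpow (by linarith) h3 hγ.le
      _ = _ := by
        rw [Real.mul_rpow (by positivity) hy0.le, hy, ← Real.rpow_mul hv0.le]
        congr 2; field_simp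

lemma rpow_self_pos (γ x : ℝ) (hγ : 0 ≤ γ) (hx : 0 < x) (e : ℝ) (he : γ = 0 → e = 0) : 0 < (γ * x) ^ e := by
  rcases hγ.eq_or_lt with h | h
  · rw [he h.symm, Real.rpow_zero]; exact one_pos
  · positivity

section
variable {X : Type*} [MeasurableSpace X] {Q : Kernel X X} [IsMarkovKernel Q] {V : X → ℝ} {c ρ : ℝ}
    {π : Measure X} [IsProbabilityMeasure π]
    {Ω : Type*} [MeasurableSpace Ω] {P : Measure Ω} [IsProbabilityMeasure P] {Xs : ℕ → Ω → X}

lemma core (S : Setup Q V c ρ π) (hch : IsMarkovChain P Xs π Q) (h : X → ℝ) (hm : Measurable h)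
    (G γ : ℝ) (hG : 0 < G) (hγ : 0 ≤ γ) (hb : ∀ x, |h x| ≤ G * Real.log (V x) ^ γ)
    (h0 : ∫ x, h x ∂π = 0) (n : ℕ) (σ2 J : ℝ)
    (hσ : σ2 = ∫ ω, (∑ j ∈ range n, h (Xs j ω)) ^ 2 ∂P) (hσ0 : 0 < σ2)
    (hJ : J = max ((n : ℝ) * ρ ^ (-(1 : ℝ) / 2) * (Real.log (1 / ρ))⁻¹ * (2 * c * ∫ x, V x ∂π) ^ 2 * G ^ 2 / σ2) 1 *
      (2 ^ (1 + 3 * γ) * γ ^ (3 * γ) * (2 * c * ∫ x, V x ∂π) * G / Real.log (1 / ρ))) :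
    0 < J ∧ ∀ t : ℝ, 0 ≤ t → (P {ω | t ≤ |∑ j ∈ range n, h (Xs j ω)|}).toReal ≤
      2 * Real.exp (-(t ^ 2 / 2) / (σ2 + J ^ (1 / (γ + 3)) * t ^ (2 - 1 / (γ + 3)))) := by
  have hp := S.piV_ge
  have he := Real.exp_pos 1
  have hp0 : 0 < ∫ x, V x ∂π := by linarith
  have hc := S.hc
  have hρ0 := S.hρ0
  have hρ1 := S.hρ1
  have hL : 0 < Real.log (1 / ρ) := Real.log_pos (by rw [lt_div_iff₀ hρ0]; linarith)
  have hJ0 : 0 < J := by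
    rw [hJ]
    refine mul_pos (lt_of_lt_of_le one_pos (le_max_right _ _)) ?_
    have := rpow_self_pos γ 1 hγ one_pos (3 * γ) (fun h => by rw [h]; ring)
    rw [mul_one] at this
    positivity
  refine ⟨hJ0, fun t ht => ?_⟩
  have hM1 : (P {ω | t ≤ |∑ j ∈ range n, h (Xs j ω)|}).toReal ≤ 1 := measureReal_le_one
  rcases ht.eq_or_lt with rfl | ht
  · simp only [ne_eq, OfNat.ofNat_ne_zero, not_false_eq_true, zero_pow, zero_div, neg_zero, Real.exp_zero]
    linarith
  have hbK : ∀ K : ℝ, 0 < K → ∀ x, |h x| ≤ G * (γ * K / Real.exp 1) ^ γ * V x ^ (1 / K) := fun K hK x => by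
    rw [mul_assoc]
    exact (hb x).trans (mul_le_mul_of_nonneg_left (log_pow_le _ _ _ (S.hVe x) hγ hK) hG.le)
  have hb0 : ∀ K : ℝ, 0 < K → 0 < G * (γ * K / Real.exp 1) ^ γ := fun K hK => by
    refine mul_pos hG ?_
    rw [mul_div_assoc]
    exact rpow_self_pos γ _ hγ (by positivity) γ id
  have hs : Slow V π h := ⟨hm, fun K hK => by
    have hK0 : (0 : ℝ) < K := by exact_mod_cast (by omega : 0 < K)
    exact ⟨_, (hb0 K hK0).le, ae_of_all _ (hbK K hK0)⟩⟩
  set Sn : Ω → ℝ := fun ω => ∑ j ∈ range n, h (Xs j ω) with hSn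
  have hS : AllI P Sn := AllI.sum _ _ fun j _ => hs.allI S hch j
  set Z := intS P (fun ω => PowerSeries.rescale (Sn ω) (PowerSeries.exp ℝ)) with hZdef
  have hZ : Z = ∏ j ∈ range n, rS Q π h j := Z_identity S hs hch n
  have hZc : ∀ i, PowerSeries.coeff i Z = (∫ ω, Sn ω ^ i ∂P) / (i.factorial : ℝ) := fun i => by
    rw [hZdef, coeff_intS]
    simp only [coeff_D]
    rw [integral_div]
  set Lam := ∑ j ∈ range n, PowerSeries.derivative ℝ (rS Q π h j) * (rS Q π h j)⁻¹ with hLam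
  have hD : PowerSeries.derivative ℝ Z = Lam * Z := by
    rw [hZ]; exact dlog_prod n _ fun j => const_rS j
  have hrec : ∀ p : ℕ, ((p : ℝ) + 1) * PowerSeries.coeff (p + 1) Z =
      ∑ k ∈ range (p + 1), PowerSeries.coeff k Lam * PowerSeries.coeff (p - k) Z := fun p => by
    have := congrArg (PowerSeries.coeff p) hD
    rw [PowerSeries.coeff_derivative, PowerSeries.coeff_mul,
      Finset.Nat.sum_antidiagonal_eq_sum_range_succ
        (fun i j => PowerSeries.coeff i Lam * PowerSeries.coeff j Z)] at this
    rw [← this]; ring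
  have hβ0 : PowerSeries.coeff 0 Z = 1 := by rw [hZc]; simp
  have hβ1 : PowerSeries.coeff 1 Z = 0 := by
    rw [hZc]
    simp only [pow_one, hSn]
    rw [integral_finsetSum _ fun j _ => (hs.allI S hch j).int]
    have : ∀ j ∈ range n, ∫ ω, h (Xs j ω) ∂P = 0 := fun j _ => by
      rw [← integral_map (hch.meas j).aemeasurable hm.aestronglyMeasurable, law_X S hch j, h0]
    rw [sum_eq_zero this]; simp
  have hβ2 : 2 * PowerSeries.coeff 2 Z = σ2 := by
    rw [hZc, hσ]; simp [hSn]; ring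
  have hΛ0 : PowerSeries.coeff 0 Lam = 0 := by
    have := hrec 0
    simp [hβ1] at this
    rw [← PowerSeries.coeff_zero_eq_constantCoeff_apply, ← PowerSeries.coeff_zero_eq_constantCoeff_apply, hβ0] at this
    exact this.resolve_right one_ne_zero
  have hΛ1 : PowerSeries.coeff 1 Lam = σ2 := by
    have := hrec 1
    rw [sum_range_succ, sum_range_one, hΛ0] at this
    norm_num at this
    rw [← PowerSeries.coeff_zero_eq_constantCoeff_apply, hβ0] at this
    linarith
  refine moment_tail (γ + 3) σ2 J t (by linarith) hσ0 hJ0 ht (fun p => PowerSeries.coeff p Z)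
    (fun p => PowerSeries.coeff p Lam) hβ0 hrec hΛ0 hΛ1 (fun k => ?_) _ hM1 (fun q => ?_)
  · refine le_trans ?_ (num_main n ρ (2 * c * ∫ x, V x ∂π) G γ σ2 J hρ0 hρ1 (by nlinarith) hG hγ hσ0 hJ k
      _ _ _ rfl rfl rfl)
    rw [hLam, map_sum]
    refine (abs_sum_le_sum_abs _ _).trans ?_
    refine (sum_le_card_nsmul _ _ _ fun j _ => ?_).trans (le_of_eq (by rw [card_range, nsmul_eq_mul]))
    exact cumulant_bound S hs h0 (hb0 ((k : ℝ) + 3) (by positivity)) k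
      (ae_of_all _ (hbK ((k : ℝ) + 3) (by positivity))) _ _ rfl rfl j
  · have h1 := mul_meas_ge_le_integral_of_nonneg (μ := P) (f := fun ω => Sn ω ^ (2 * q))
      (ae_of_all _ fun ω => by simp only [Pi.zero_apply]; rw [pow_mul]; positivity) (hS.pow (2 * q)).int (t ^ (2 * q))
    have h2 : (P {ω | t ≤ |Sn ω|}).toReal ≤ P.real {ω | t ^ (2 * q) ≤ Sn ω ^ (2 * q)} := by
      refine measureReal_mono (μ := P) fun ω hω => ?_
      simp only [Set.mem_setOf_eq] at hω ⊢
      have := pow_le_pow_left₀ ht.le hω (2 * q)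
      rwa [pow_mul |Sn ω|, sq_abs, ← pow_mul] at this
    have h3 := mul_le_mul_of_nonneg_right h2 (pow_nonneg ht.le (2 * q))
    simp only [hZc]
    rw [mul_div_cancel₀ _ (by positivity)]
    refine h3.trans ?_
    rw [mul_comm]; exact h1
end

/-- Theorem 5 (Bernstein-type inequality for the stationary chain, class `L_{W^γ}`). -/
theorem bernstein_log_V
    {X : Type*} [MeasurableSpace X]
    (Q : ProbabilityTheory.Kernel X X) [ProbabilityTheory.IsMarkovKernel Q]
    (V : X → ℝ) (lam b : ℝ) (m : ℕ) (eps d c ρ : ℝ) (piQ : Measure X)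
    [IsProbabilityMeasure piQ]
    -- Assumption A1
    (hV : Measurable V) (hVe : ∀ x, Real.exp 1 ≤ V x)
    (hlam0 : 0 < lam) (hlam1 : lam < 1) (hb : 0 ≤ b)
    (hdrift : ∀ x, ∫ y, V y ∂(Q x) ≤ lam * V x + b)
    -- Assumption A2
    (hm : 1 ≤ m) (heps0 : 0 < eps) (heps1 : eps < 1) (hd : 0 ≤ d)
    (hsmallcond : lam + 2 * b / (1 + d) < 1)
    (hsmall : ∃ ν : Measure X, IsProbabilityMeasure ν ∧
      ∀ x, V x ≤ d → ∀ A : Set X, MeasurableSet A →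
        ENNReal.ofReal eps * ν A ≤ (kIter Q m) x A)
    -- piQ is the unique invariant probability measure, with piQ(V) < ∞
    (hinv : piQ.bind (fun x => Q x) = piQ)
    (huniq : ∀ π' : Measure X, IsProbabilityMeasure π' →
      π'.bind (fun x => Q x) = π' → π' = piQ)
    (hpiV : Integrable V piQ)
    -- geometric ergodicity constants c ≥ 1, ρ ∈ (0,1)
    (hc : 1 ≤ c) (hρ0 : 0 < ρ) (hρ1 : ρ < 1)
    (herg : ∀ ξ : Measure X, IsProbabilityMeasure ξ → Integrable V ξ → ∀ k : ℕ,
      wTV V (ξ.bind (fun x => (kIter Q k) x)) piQ ≤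
        c * ((∫ x, V x ∂ξ) + ∫ x, V x ∂piQ) * ρ ^ k)
    -- γ and the function g ∈ L_{W^γ}
    (γ : ℝ) (hγ : 0 ≤ γ)
    (g : X → ℝ) (hg : MemL (fun x => Real.log (V x) ^ γ) g)
    (n : ℕ) (hn : 1 ≤ n)
    -- the stationary canonical chain
    {Ω : Type*} [MeasurableSpace Ω] (P : Measure Ω) [IsProbabilityMeasure P]
    (Xs : ℕ → Ω → X) (hchain : IsMarkovChain P Xs piQ Q)
    -- the variance of S_n is positive
    (hvar : 0 < ∫ ω, (∑ ℓ ∈ Finset.range n, (g (Xs ℓ ω) - ∫ x, g x ∂piQ)) ^ 2 ∂P)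
    -- the constant J_n
    (Jn : ℝ)
    (hJn : Jn =
      max ((n : ℝ) * ρ ^ (-(1 : ℝ) / 2) * (Real.log (1 / ρ))⁻¹ *
            (2 * c * ∫ x, V x ∂piQ) ^ 2 *
            vnorm (fun x => Real.log (V x) ^ γ) (fun x => g x - ∫ y, g y ∂piQ) ^ 2 /
            (∫ ω, (∑ ℓ ∈ Finset.range n, (g (Xs ℓ ω) - ∫ x, g x ∂piQ)) ^ 2 ∂P)) 1 *
        (2 ^ (1 + 3 * γ) * γ ^ (3 * γ) * (2 * c * ∫ x, V x ∂piQ) *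
          vnorm (fun x => Real.log (V x) ^ γ) (fun x => g x - ∫ y, g y ∂piQ) /
          Real.log (1 / ρ))) :
    (∀ t : ℝ, 0 ≤ t →
      (P {ω | t ≤ |∑ ℓ ∈ Finset.range n, (g (Xs ℓ ω) - ∫ x, g x ∂piQ)|}).toReal ≤
        2 * Real.exp (-(t ^ 2 / 2) /
          ((∫ ω, (∑ ℓ ∈ Finset.range n, (g (Xs ℓ ω) - ∫ x, g x ∂piQ)) ^ 2 ∂P)
            + Jn ^ (1 / (γ + 3)) * t ^ (2 - 1 / (γ + 3)))))
    ∧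
    (∀ δ : ℝ, 0 < δ → δ < 1 →
      (P {ω |
          2 * Real.sqrt (∫ ω', (∑ ℓ ∈ Finset.range n,
                (g (Xs ℓ ω') - ∫ x, g x ∂piQ)) ^ 2 ∂P) * Real.sqrt (Real.log (4 / δ))
            + 4 ^ (γ + 3) * Jn * Real.log (4 / δ) ^ (γ + 3) ≤
          |∑ ℓ ∈ Finset.range n, (g (Xs ℓ ω) - ∫ x, g x ∂piQ)|}).toReal ≤ δ) := by
  have S : Setup Q V c ρ piQ := ⟨hV, hVe, hinv, hpiV, hc, hρ0, hρ1, herg⟩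
  have hW : ∀ x, 1 ≤ Real.log (V x) := fun x => by
    rw [Real.le_log_iff_exp_le (by linarith [S.V1 x])]; exact hVe x
  have hWγ : ∀ x, 1 ≤ Real.log (V x) ^ γ := fun x => Real.one_le_rpow (hW x) hγ
  set G := vnorm (fun x => Real.log (V x) ^ γ) (fun x => g x - ∫ y, g y ∂piQ) with hGdef
  have hbdd : BddAbove (Set.range fun x => |g x - ∫ y, g y ∂piQ| / Real.log (V x) ^ γ) := by
    obtain ⟨B, hB⟩ := hg.bdd
    refine ⟨B + |∫ y, g y ∂piQ|, ?_⟩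
    rintro _ ⟨x, rfl⟩
    have h1 : |g x| / Real.log (V x) ^ γ ≤ B := hB ⟨x, rfl⟩
    have h2 := hWγ x
    have h3 : |∫ y, g y ∂piQ| / Real.log (V x) ^ γ ≤ |∫ y, g y ∂piQ| := div_le_self (abs_nonneg _) h2
    calc |g x - ∫ y, g y ∂piQ| / Real.log (V x) ^ γ
        ≤ (|g x| + |∫ y, g y ∂piQ|) / Real.log (V x) ^ γ :=
          div_le_div_of_nonneg_right (abs_sub _ _) (by linarith)
      _ ≤ _ := by rw [add_div]; exact add_le_add h1 h3
  have hle : ∀ x, |g x - ∫ y, g y ∂piQ| ≤ G * Real.log (V x) ^ γ := fun x => by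
    have h2 := hWγ x
    rw [← div_le_iff₀ (by linarith)]
    exact le_ciSup hbdd x
  have hG0 : 0 ≤ G := Real.iSup_nonneg fun x => div_nonneg (abs_nonneg _) (by linarith [hWγ x])
  have hG : 0 < G := by
    refine lt_of_le_of_ne hG0 fun h => ?_
    have hz : ∀ x, g x - ∫ y, g y ∂piQ = 0 := fun x => by
      have := hle x
      rw [← h, zero_mul] at this
      exact abs_nonpos_iff.1 this
    simp [hz] at hvar
  have hmeas : Measurable fun x => g x - ∫ y, g y ∂piQ := hg.meas.sub_const _
  have hint : Integrable g piQ := by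
    have h1 : Integrable (fun x => g x - ∫ y, g y ∂piQ) piQ := by
      refine (S.hpiV.const_mul (G * (γ * 1 / Real.exp 1) ^ γ)).mono' hmeas.aestronglyMeasurable
        (ae_of_all _ fun x => (hle x).trans ?_)
      have := log_pow_le (V x) γ 1 (hVe x) hγ one_pos
      rw [div_one, Real.rpow_one] at this
      rw [mul_assoc]
      exact mul_le_mul_of_nonneg_left this hG0
    have := h1.add (integrable_const (∫ y, g y ∂piQ))
    refine this.congr (ae_of_all _ fun x => ?_)
    simp
  have h0 : ∫ x, (g x - ∫ y, g y ∂piQ) ∂piQ = 0 := by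
    rw [integral_sub hint (integrable_const _)]; simp
  obtain ⟨hJ0, hmain⟩ := core S hchain (fun x => g x - ∫ y, g y ∂piQ) hmeas G γ hG hγ hle h0 n _ Jn rfl hvar hJn
  refine ⟨hmain, fun δ hδ hδ1 => ?_⟩
  have hL : 0 ≤ Real.log (4 / δ) := Real.log_nonneg (by rw [le_div_iff₀ hδ]; linarith)
  exact part_two (γ + 3) _ Jn δ (by linarith) hvar hJ0 hδ hδ1 _ _ rfl (hmain _ (by positivity))
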